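/- Fix an integer d ≥ 2 and δ ∈ (0,1). Let a^{jk} : ℝ → ℝ (1 ≤ j,k ≤ d) be smooth functions of x¹ only, with a^{jk} = a^{kj} and δ|θ|² ≤ Σ_{j,k=1}^d a^{jk}(x¹) θ^j θ^k ≤ δ⁻¹|θ|² for all x¹ and θ ∈ ℝ^d. Set L₀v = v_t + Σ_{j,k} a^{jk}(x¹) v_{x^j x^k}. Let κ ≥ 4 and r > 0, let u : ℝ^{d+1} → ℝ be smooth with compact support, and let h be smooth on an open neighborhood of the closure of Q_{κr} with L₀h = 0 in Q_{κr} and h = u on the parabolic boundary ∂'Q_{κr} = ([0,(κr)²] × ∂B_{κr}) ∪ ({(κr)²} × B_{κr}). Then there is N = N(d,δ) such that, for w = h_t and for each w = h_{x^j x^k} with 1 ≤ j ≤ d and 2 ≤ k ≤ d: ⨍_{Q_r} |w − (w)_{Q_r}|² dx dt ≤ N κ^{-2} [ (|L₀u|²)_{Q_{κr}} + (|u_{xx}|²)_{Q_{κr}} ]. -/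

import Mathlib

open MeasureTheory

/-- Partial derivative in `t`. -/
noncomputable def pdt {d : ℕ} (u : ℝ × (Fin d → ℝ) → ℝ) : ℝ × (Fin d → ℝ) → ℝ :=
  fun p => fderiv ℝ u p (1, 0)

/-- Partial derivative in `x^j`. -/
noncomputable def pdx {d : ℕ} (j : Fin d) (u : ℝ × (Fin d → ℝ) → ℝ) :
    ℝ × (Fin d → ℝ) → ℝ :=
  fun p => fderiv ℝ u p (0, Pi.single j 1)

/-- Second partial derivative in `x^j, x^k`. -/
noncomputable def pdxx {d : ℕ} (j k : Fin d) (u : ℝ × (Fin d → ℝ) → ℝ) :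
    ℝ × (Fin d → ℝ) → ℝ :=
  pdx j (pdx k u)

/-- Open Euclidean ball `B_r ⊂ ℝ^d` centered at the origin. -/
def ballE (d : ℕ) (r : ℝ) : Set (Fin d → ℝ) := {x | ∑ j, (x j) ^ 2 < r ^ 2}

/-- Euclidean sphere `∂B_r ⊂ ℝ^d` centered at the origin. -/
def sphereE (d : ℕ) (r : ℝ) : Set (Fin d → ℝ) := {x | ∑ j, (x j) ^ 2 = r ^ 2}

/-- Parabolic cylinder `Q_r = (0,r²) × B_r`. -/
def Qc (d : ℕ) (r : ℝ) : Set (ℝ × (Fin d → ℝ)) := Set.Ioo 0 (r ^ 2) ×ˢ ballE d r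

/-- Parabolic boundary `∂'Q_r = ([0,r²] × ∂B_r) ∪ ({r²} × B_r)`. -/
def pbQc (d : ℕ) (r : ℝ) : Set (ℝ × (Fin d → ℝ)) :=
  (Set.Icc 0 (r ^ 2) ×ˢ sphereE d r) ∪ (({r ^ 2} : Set ℝ) ×ˢ ballE d r)

/-- Average of `f` over a set `s` (of finite positive measure). -/
noncomputable def avg {d : ℕ} (s : Set (ℝ × (Fin d → ℝ)))
    (f : ℝ × (Fin d → ℝ) → ℝ) : ℝ :=
  ((volume s).toReal)⁻¹ * ∫ p in s, f p

/-!
Since the coefficients depend on `x^o` only, dividing `L₀` by `a^{oo}` puts it in divergence form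
without lower order terms: in each product `(a^{jk} / a^{oo}) w_{jk}` with `(j, k) ≠ (o, o)` one of
the two derivatives is tangential and commutes with the coefficient, and the coefficient of `w_oo`
is `1`. This gives an energy inequality, which together with a Poincaré inequality bounds `h - u`
in `L²` by `L₀ u`, and with a cutoff function gives Caccioppoli's inequality. The remaining
derivatives `w_t` and `w_oo` are estimated by squaring `w_t / a^{oo} + w_oo` and integrating the
cross term `w_t w_oo` by parts.

The derivatives `∂_t` and `∂_k`, `k ≠ o`, commute with `L₀`, so these estimates can be iterated on
solutions, and a Sobolev inequality with one derivative in each direction turns them into pointwise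
bounds. The one third derivative out of reach, `∂_o² ∂_k h`, is read off from the equation for
`∂_k h`. Applied to the derivatives of `h` that are controlled by `L₀ u` and `u_xx`, this bounds the
gradients of `h_t` and `h_{jk}`, `k ≠ o`, on a small cylinder. The mean value inequality and
parabolic scaling then yield the decay `κ⁻²`.
-/

open scoped ContDiff

/-! ### Directional and partial derivatives -/

section DirectionalDerivatives

variable {E F : Type*} [NormedAddCommGroup E] [NormedSpace ℝ E]
  [NormedAddCommGroup F] [NormedSpace ℝ F] {f : E → F}

lemma contDiff_fderiv_apply (hf : ContDiff ℝ ∞ f) (e : E) :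
    ContDiff ℝ ∞ fun p => fderiv ℝ f p e :=
  (hf.fderiv_right (by simp)).clm_apply contDiff_const

lemma fderiv_fderiv_apply_comm (hf : ContDiff ℝ ∞ f) (e e' p : E) :
    fderiv ℝ (fun q => fderiv ℝ f q e) p e' = fderiv ℝ (fun q => fderiv ℝ f q e') p e := by
  have hdiff : DifferentiableAt ℝ (fderiv ℝ f) p :=
    (hf.fderiv_right (m := ∞) (by simp)).differentiable (by simp) p
  have hsymm : IsSymmSndFDerivAt ℝ f p := hf.contDiffAt.isSymmSndFDerivAt (by
    rw [minSmoothness_of_isRCLikeNormedField]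
    exact WithTop.coe_le_coe.2 (le_top : (2 : ℕ∞) ≤ ⊤))
  simpa [fderiv_clm_apply hdiff (differentiableAt_const _)] using hsymm e' e

lemma eqOn_fderiv_apply {g : E → F} {s : Set E} (hs : IsOpen s) (h : Set.EqOn f g s) (e : E) :
    Set.EqOn (fun p => fderiv ℝ f p e) (fun p => fderiv ℝ g p e) s := fun p hp => by
  simp only [(h.eventuallyEq_of_mem (hs.mem_nhds hp)).fderiv_eq]

end DirectionalDerivatives

section PartialDerivatives

variable {d : ℕ} {f g : ℝ × (Fin d → ℝ) → ℝ}

@[fun_prop] lemma contDiff_pdt (hf : ContDiff ℝ ∞ f) : ContDiff ℝ ∞ (pdt f) :=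
  contDiff_fderiv_apply hf _

@[fun_prop] lemma contDiff_pdx (hf : ContDiff ℝ ∞ f) (j : Fin d) : ContDiff ℝ ∞ (pdx j f) :=
  contDiff_fderiv_apply hf _

@[fun_prop] lemma contDiff_pdxx (hf : ContDiff ℝ ∞ f) (j k : Fin d) :
    ContDiff ℝ ∞ (pdxx j k f) :=
  contDiff_pdx (contDiff_pdx hf k) j

@[fun_prop] lemma continuous_pdt (hf : ContDiff ℝ ∞ f) : Continuous (pdt f) :=
  (contDiff_pdt hf).continuous

@[fun_prop] lemma continuous_pdx (hf : ContDiff ℝ ∞ f) (j : Fin d) : Continuous (pdx j f) :=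
  (contDiff_pdx hf j).continuous

@[fun_prop] lemma continuous_pdxx (hf : ContDiff ℝ ∞ f) (j k : Fin d) :
    Continuous (pdxx j k f) :=
  (contDiff_pdxx hf j k).continuous

@[fun_prop] lemma differentiable_pdt (hf : ContDiff ℝ ∞ f) : Differentiable ℝ (pdt f) :=
  (contDiff_pdt hf).differentiable (by simp)

@[fun_prop] lemma differentiable_pdx (hf : ContDiff ℝ ∞ f) (j : Fin d) :
    Differentiable ℝ (pdx j f) :=
  (contDiff_pdx hf j).differentiable (by simp)

lemma pdx_pdx_comm (hf : ContDiff ℝ ∞ f) (j k : Fin d) : pdx j (pdx k f) = pdx k (pdx j f) :=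
  funext fun _ => fderiv_fderiv_apply_comm hf _ _ _

lemma pdx_pdt_comm (hf : ContDiff ℝ ∞ f) (j : Fin d) : pdx j (pdt f) = pdt (pdx j f) :=
  funext fun _ => fderiv_fderiv_apply_comm hf _ _ _

lemma pdx_mul (hf : Differentiable ℝ f) (hg : Differentiable ℝ g) (k : Fin d) :
    pdx k (fun p => f p * g p) = fun p => f p * pdx k g p + pdx k f p * g p := by
  funext p
  simp [pdx, fderiv_fun_mul (hf p) (hg p), mul_comm]

lemma pdt_mul (hf : Differentiable ℝ f) (hg : Differentiable ℝ g) :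
    pdt (fun p => f p * g p) = fun p => f p * pdt g p + pdt f p * g p := by
  funext p
  simp [pdt, fderiv_fun_mul (hf p) (hg p), mul_comm]

lemma pdx_sub (hf : Differentiable ℝ f) (hg : Differentiable ℝ g) (k : Fin d) :
    pdx k (fun p => f p - g p) = fun p => pdx k f p - pdx k g p := by
  funext p
  simp [pdx, fderiv_fun_sub (hf p) (hg p)]

lemma pdt_sub (hf : Differentiable ℝ f) (hg : Differentiable ℝ g) :
    pdt (fun p => f p - g p) = fun p => pdt f p - pdt g p := by
  funext p
  simp [pdt, fderiv_fun_sub (hf p) (hg p)]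

lemma fderiv_comp_coord_apply {b : ℝ → ℝ} (hb : Differentiable ℝ b) (o : Fin d)
    (p e : ℝ × (Fin d → ℝ)) :
    fderiv ℝ (fun q : ℝ × (Fin d → ℝ) => b (q.2 o)) p e = e.2 o * deriv b (p.2 o) := by
  have hcoord : HasFDerivAt (fun q : ℝ × (Fin d → ℝ) => q.2 o)
      ((ContinuousLinearMap.proj o).comp (ContinuousLinearMap.snd ℝ ℝ (Fin d → ℝ))) p :=
    ((ContinuousLinearMap.proj (R := ℝ) (φ := fun _ : Fin d => ℝ) o).comp
      (ContinuousLinearMap.snd ℝ ℝ (Fin d → ℝ))).hasFDerivAt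
  have hcomp := ((hb (p.2 o)).hasDerivAt.comp_hasFDerivAt p hcoord).fderiv
  simp only [Function.comp_def] at hcomp
  simp [hcomp, mul_comm]

lemma pdx_comp_coord {b : ℝ → ℝ} (hb : Differentiable ℝ b) {o k : Fin d} (hk : k ≠ o) :
    pdx k (fun p : ℝ × (Fin d → ℝ) => b (p.2 o)) = fun _ => 0 := by
  funext p
  simp [pdx, fderiv_comp_coord_apply hb, hk.symm]

lemma pdt_comp_coord {b : ℝ → ℝ} (hb : Differentiable ℝ b) (o : Fin d) :
    pdt (fun p : ℝ × (Fin d → ℝ) => b (p.2 o)) = fun _ => 0 := by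
  funext p
  simp [pdt, fderiv_comp_coord_apply hb]

lemma pdx_coord (o : Fin d) : pdx o (fun p : ℝ × (Fin d → ℝ) => p.2 o) = fun _ => 1 := by
  funext p
  simpa [pdx] using
    fderiv_comp_coord_apply (b := fun s => s) differentiable_id o p (0, Pi.single o 1)

lemma fderiv_apply_eq_sum (p e : ℝ × (Fin d → ℝ)) :
    fderiv ℝ f p e = e.1 * pdt f p + ∑ j, e.2 j * pdx j f p := by
  have he : e = e.1 • ((1, 0) : ℝ × (Fin d → ℝ))
      + ∑ j, e.2 j • ((0, Pi.single j 1) : ℝ × (Fin d → ℝ)) := by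
    refine Prod.ext ?_ (funext fun i => ?_)
    · simp [Prod.fst_sum]
    · simp [Prod.snd_sum, Finset.sum_apply, Pi.single_apply]
  conv_lhs => rw [he]
  simp only [pdt, pdx, map_add, map_sum, map_smul, smul_eq_mul]

lemma hasDerivAt_update_pdx (hf : Differentiable ℝ f) (t : ℝ) (x : Fin d → ℝ) (k : Fin d)
    (s : ℝ) :
    HasDerivAt (fun s => f (t, Function.update x k s)) (pdx k f (t, Function.update x k s)) s :=
  (hf _).hasFDerivAt.comp_hasDerivAt s
    ((hasDerivAt_const s t).prodMk (hasDerivAt_update x k s))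

lemma hasDerivAt_pdt (hf : Differentiable ℝ f) (x : Fin d → ℝ) (s : ℝ) :
    HasDerivAt (fun s => f (s, x)) (pdt f (s, x)) s :=
  (hf _).hasFDerivAt.comp_hasDerivAt s ((hasDerivAt_id s).prodMk (hasDerivAt_const s x))

end PartialDerivatives

/-! ### Parabolic cylinders -/

section Cylinders

variable {d : ℕ} {f g : ℝ × (Fin d → ℝ) → ℝ} {r s : ℝ}

lemma isOpen_ballE (d : ℕ) (r : ℝ) : IsOpen (ballE d r) :=
  isOpen_lt (by fun_prop) (by fun_prop)

lemma isOpen_Qc (d : ℕ) (r : ℝ) : IsOpen (Qc d r) :=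
  isOpen_Ioo.prod (isOpen_ballE d r)

lemma ballE_subset_closedBall (hr : 0 ≤ r) : ballE d r ⊆ Metric.closedBall 0 r := by
  intro x hx
  rw [mem_closedBall_zero_iff, pi_norm_le_iff_of_nonneg hr]
  intro i
  have hle : x i ^ 2 ≤ ∑ j, x j ^ 2 :=
    Finset.single_le_sum (f := fun j => x j ^ 2) (fun j _ => sq_nonneg _) (Finset.mem_univ i)
  exact abs_le_of_sq_le_sq (hle.trans hx.le) hr

lemma Qc_subset_box (hr : 0 ≤ r) : Qc d r ⊆ Set.Icc 0 (r ^ 2) ×ˢ Metric.closedBall 0 r :=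
  Set.prod_mono Set.Ioo_subset_Icc_self (ballE_subset_closedBall hr)

lemma isCompact_box (d : ℕ) (r : ℝ) :
    IsCompact (Set.Icc 0 (r ^ 2) ×ˢ Metric.closedBall (0 : Fin d → ℝ) r) :=
  isCompact_Icc.prod (isCompact_closedBall _ _)

lemma Qc_mono (hr : 0 ≤ r) (h : r ≤ s) : Qc d r ⊆ Qc d s := by
  have hsq : r ^ 2 ≤ s ^ 2 := by gcongr
  exact Set.prod_mono (Set.Ioo_subset_Ioo_right hsq) fun x hx => hx.trans_le hsq

lemma volume_Qc_lt_top (hr : 0 ≤ r) : volume (Qc d r) < ⊤ :=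
  (measure_mono (Qc_subset_box hr)).trans_lt (isCompact_box d r).measure_lt_top

lemma volume_Qc_pos (hr : 0 < r) : 0 < volume (Qc d r) := by
  refine (isOpen_Qc d r).measure_pos volume ⟨(r ^ 2 / 2, 0), ⟨by positivity, ?_⟩, ?_⟩
  · exact half_lt_self (by positivity)
  · simp only [ballE, Set.mem_ofPred_eq, Pi.zero_apply, ne_eq, OfNat.ofNat_ne_zero,
      not_false_eq_true, zero_pow, Finset.sum_const_zero]
    positivity

lemma integrableOn_Qc (hr : 0 ≤ r) (hf : Continuous f) : IntegrableOn f (Qc d r) :=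
  (hf.continuousOn.integrableOn_compact (isCompact_box d r)).mono_set (Qc_subset_box hr)

lemma integral_Qc_mono (hr : 0 ≤ r) (hf : Continuous f) (hg : Continuous g)
    (h : ∀ p ∈ Qc d r, f p ≤ g p) : ∫ p in Qc d r, f p ≤ ∫ p in Qc d r, g p :=
  setIntegral_mono_on (integrableOn_Qc hr hf) (integrableOn_Qc hr hg)
    (isOpen_Qc d r).measurableSet h

lemma integral_Qc_mono_radius (hr : 0 ≤ r) (h : r ≤ s) (hf : Continuous f) (h0 : ∀ p, 0 ≤ f p) :
    ∫ p in Qc d r, f p ≤ ∫ p in Qc d s, f p :=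
  setIntegral_mono_set (integrableOn_Qc (hr.trans h) hf) (Filter.Eventually.of_forall h0)
    (Qc_mono hr h).eventuallyLE

lemma integral_Qc_add (hr : 0 ≤ r) (hf : Continuous f) (hg : Continuous g) :
    ∫ p in Qc d r, (f p + g p) = (∫ p in Qc d r, f p) + ∫ p in Qc d r, g p :=
  integral_add (integrableOn_Qc hr hf) (integrableOn_Qc hr hg)

lemma integral_Qc_sub (hr : 0 ≤ r) (hf : Continuous f) (hg : Continuous g) :
    ∫ p in Qc d r, (f p - g p) = (∫ p in Qc d r, f p) - ∫ p in Qc d r, g p :=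
  integral_sub (integrableOn_Qc hr hf) (integrableOn_Qc hr hg)

lemma integral_Qc_sum {ι : Type*} (t : Finset ι) {F : ι → ℝ × (Fin d → ℝ) → ℝ} (hr : 0 ≤ r)
    (hF : ∀ i, Continuous (F i)) :
    ∫ p in Qc d r, ∑ i ∈ t, F i p = ∑ i ∈ t, ∫ p in Qc d r, F i p :=
  integral_finsetSum t fun i _ => integrableOn_Qc hr (hF i)

lemma sphereE_subset_closure_ballE {R : ℝ} (hR : 0 < R) : sphereE d R ⊆ closure (ballE d R) := by
  intro x hx
  have hmaps : Set.MapsTo (fun c : ℝ => c • x) (Set.Ioo 0 1) (ballE d R) := fun c hc => by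
    have hnorm : ∑ j, (c • x) j ^ 2 = c ^ 2 * R ^ 2 := by
      simp only [Pi.smul_apply, smul_eq_mul, mul_pow, ← Finset.mul_sum]
      rw [hx]
    have hc1 : c ^ 2 < 1 := pow_lt_one₀ hc.1.le hc.2 two_ne_zero
    calc ∑ j, (c • x) j ^ 2 = c ^ 2 * R ^ 2 := hnorm
      _ < R ^ 2 := mul_lt_of_lt_one_left (by positivity) hc1
  have hone : (1 : ℝ) ∈ closure (Set.Ioo 0 1) := by simp [closure_Ioo zero_ne_one]
  simpa using map_mem_closure (by fun_prop : Continuous fun c : ℝ => c • x) hone hmaps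

lemma pbQc_subset_closure_Qc {R : ℝ} (hR : 0 < R) : pbQc d R ⊆ closure (Qc d R) := by
  rw [Qc, closure_prod_eq, closure_Ioo (pow_pos hR 2).ne]
  rintro ⟨t, x⟩ (⟨ht, hx⟩ | ⟨ht, hx⟩)
  · exact ⟨ht, sphereE_subset_closure_ballE hR hx⟩
  · refine ⟨?_, subset_closure hx⟩
    rw [Set.mem_singleton_iff.1 ht]
    exact Set.right_mem_Icc.2 (pow_pos hR 2).le

end Cylinders

/-! ### Integration by parts over a cylinder -/

section Divergence

variable {d : ℕ} {F : ℝ × (Fin d → ℝ) → ℝ} {R : ℝ}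

lemma integral_deriv_sq_lt_eq_zero {φ φ' : ℝ → ℝ} {c : ℝ} (hφ : ∀ s, HasDerivAt φ (φ' s) s)
    (hφ' : Continuous φ') (h0 : ∀ s, s ^ 2 = c → φ s = 0) :
    ∫ s in {s : ℝ | s ^ 2 < c}, φ' s = 0 := by
  rcases le_or_gt c 0 with hc | hc
  · have hempty : {s : ℝ | s ^ 2 < c} = ∅ :=
      Set.eq_empty_of_forall_notMem fun s hs => (hc.trans (sq_nonneg s)).not_gt hs
    rw [hempty, setIntegral_empty]
  have hIoo : {s : ℝ | s ^ 2 < c} = Set.Ioo (-√c) √c := by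
    ext s
    exact Real.sq_lt
  rw [hIoo, ← integral_Ioc_eq_integral_Ioo,
    ← intervalIntegral.integral_of_le (neg_le_self (Real.sqrt_nonneg c)),
    intervalIntegral.integral_eq_sub_of_hasDerivAt (fun s _ => hφ s)
      (hφ'.intervalIntegrable _ _),
    h0 _ (Real.sq_sqrt hc.le), h0 _ (by rw [neg_sq, Real.sq_sqrt hc.le]), sub_zero]

lemma update_mem_ballE_iff {n : ℕ} (k : Fin (n + 1)) (y : Fin n → ℝ) (s : ℝ) :
    Function.update (k.insertNth 0 y : Fin (n + 1) → ℝ) k s ∈ ballE (n + 1) R ↔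
      s ^ 2 < R ^ 2 - ∑ j, y j ^ 2 := by
  simp [ballE, Fin.sum_univ_succAbove _ k, lt_sub_iff_add_lt]

lemma update_mem_sphereE_iff {n : ℕ} (k : Fin (n + 1)) (y : Fin n → ℝ) (s : ℝ) :
    Function.update (k.insertNth 0 y : Fin (n + 1) → ℝ) k s ∈ sphereE (n + 1) R ↔
      s ^ 2 = R ^ 2 - ∑ j, y j ^ 2 := by
  simp [sphereE, Fin.sum_univ_succAbove _ k, eq_sub_iff_add_eq]

lemma integral_ballE_pdx_eq_zero (hF : ContDiff ℝ ∞ F) (k : Fin d) (hR : 0 ≤ R) (t : ℝ)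
    (h0 : ∀ x ∈ sphereE d R, F (t, x) = 0) :
    ∫ x in ballE d R, pdx k F (t, x) = 0 := by
  obtain _ | n := d
  · exact k.elim0
  have hball := (isOpen_ballE (n + 1) R).measurableSet
  have hcont : Continuous fun x => pdx k F (t, x) := (continuous_pdx hF k).comp (by fun_prop)
  have hintegrable : Integrable ((ballE (n + 1) R).indicator fun x => pdx k F (t, x)) := by
    rw [integrable_indicator_iff hball]
    exact (hcont.continuousOn.integrableOn_compact (isCompact_closedBall _ _)).mono_set
      (ballE_subset_closedBall hR)
  have hsplit := (volume_preserving_piFinSuccAbove (fun _ : Fin (n + 1) => ℝ) k).symm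
  have hintegrable_split := hsplit.integrable_comp_of_integrable hintegrable
  simp only [Function.comp_def] at hintegrable_split
  rw [← integral_indicator hball, ← hsplit.integral_comp', Measure.volume_eq_prod,
    integral_prod_symm _ hintegrable_split]
  refine integral_eq_zero_of_ae (Filter.Eventually.of_forall fun y => ?_)
  have hline (s : ℝ) : (MeasurableEquiv.piFinSuccAbove (fun _ : Fin (n + 1) => ℝ) k).symm (s, y)
      = Function.update (k.insertNth 0 y : Fin (n + 1) → ℝ) k s := by
    simp [MeasurableEquiv.piFinSuccAbove, Fin.insertNthEquiv, Fin.update_insertNth]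
  have hslice (s : ℝ) : (ballE (n + 1) R).indicator (fun x => pdx k F (t, x))
        (Function.update (k.insertNth 0 y : Fin (n + 1) → ℝ) k s)
      = {s : ℝ | s ^ 2 < R ^ 2 - ∑ j, y j ^ 2}.indicator
        (fun s => pdx k F (t, Function.update (k.insertNth 0 y : Fin (n + 1) → ℝ) k s)) s := by
    simp only [Set.indicator, update_mem_ballE_iff, Set.mem_ofPred_eq]
  simp only [hline, hslice, Pi.zero_apply]
  rw [integral_indicator (measurableSet_lt (by fun_prop) (by fun_prop))]
  exact integral_deriv_sq_lt_eq_zero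
    (fun s => hasDerivAt_update_pdx (hF.differentiable (by simp)) t _ k s)
    (hcont.comp (by fun_prop)) fun s hs => h0 _ ((update_mem_sphereE_iff k y s).2 hs)

lemma integral_Qc_pdx_eq_zero (hF : ContDiff ℝ ∞ F) (k : Fin d) (hR : 0 ≤ R)
    (h0 : ∀ p ∈ pbQc d R, F p = 0) :
    ∫ p in Qc d R, pdx k F p = 0 := by
  have hintegrable := integrableOn_Qc hR (continuous_pdx hF k)
  rw [Measure.volume_eq_prod] at hintegrable ⊢
  rw [Qc, setIntegral_prod _ hintegrable]
  exact setIntegral_eq_zero_of_forall_eq_zero fun t ht =>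
    integral_ballE_pdx_eq_zero hF k hR t fun x hx =>
      h0 _ (Or.inl ⟨Set.Ioo_subset_Icc_self ht, hx⟩)

lemma integral_Qc_pdt_nonpos (hF : ContDiff ℝ ∞ F) (hR : 0 ≤ R)
    (h0 : ∀ p ∈ pbQc d R, F p = 0) (hnonneg : ∀ p, 0 ≤ F p) :
    ∫ p in Qc d R, pdt F p ≤ 0 := by
  have hintegrable := integrableOn_Qc hR (continuous_pdt hF)
  rw [Measure.volume_eq_prod] at hintegrable ⊢
  have hintegrable_swap := hintegrable.swap
  simp only [Function.comp_def] at hintegrable_swap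
  rw [Qc, ← setIntegral_prod_swap, setIntegral_prod _ hintegrable_swap]
  refine setIntegral_nonpos (isOpen_ballE d R).measurableSet fun x hx => ?_
  simp only [Prod.swap_prod_mk]
  rw [← integral_Ioc_eq_integral_Ioo, ← intervalIntegral.integral_of_le (by positivity),
    intervalIntegral.integral_eq_sub_of_hasDerivAt
      (fun s _ => hasDerivAt_pdt (hF.differentiable (by simp)) x s)
      (((continuous_pdt hF).comp (by fun_prop)).intervalIntegrable _ _),
    h0 _ (Or.inr ⟨Set.mem_singleton _, hx⟩), zero_sub]
  exact neg_nonpos.2 (hnonneg _)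

end Divergence

/-! ### Uniformly elliptic coefficients depending on one coordinate -/

/-- Smooth symmetric coefficients `a^{jk}` of one real variable with
`δ |θ|² ≤ ∑ a^{jk} θ^j θ^k ≤ δ⁻¹ |θ|²`. -/
structure IsUniformlyElliptic {d : ℕ} (δ : ℝ) (a : ℝ → Fin d → Fin d → ℝ) : Prop where
  pos : 0 < δ
  contDiff : ∀ j k, ContDiff ℝ ∞ fun s => a s j k
  symm : ∀ s j k, a s j k = a s k j
  le_quadForm : ∀ (s : ℝ) (θ : Fin d → ℝ),
    δ * ∑ j, θ j ^ 2 ≤ ∑ j, ∑ k, a s j k * θ j * θ k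
  quadForm_le : ∀ (s : ℝ) (θ : Fin d → ℝ),
    ∑ j, ∑ k, a s j k * θ j * θ k ≤ δ⁻¹ * ∑ j, θ j ^ 2

/-- The operator `L₀ w = w_t + ∑ a^{jk}(x^o) w_{x^j x^k}`, where `o` is the coordinate on which
the coefficients depend. -/
noncomputable def parabolicOp {d : ℕ} (o : Fin d) (a : ℝ → Fin d → Fin d → ℝ)
    (w : ℝ × (Fin d → ℝ) → ℝ) : ℝ × (Fin d → ℝ) → ℝ :=
  fun p => pdt w p + ∑ j, ∑ k, a (p.2 o) j k * pdxx j k w p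

/-- The coefficient `1 / a^{oo}` of `∂_t` after dividing `L₀` by `a^{oo}`. -/
noncomputable def timeCoeff {d : ℕ} (o : Fin d) (a : ℝ → Fin d → Fin d → ℝ) :
    ℝ × (Fin d → ℝ) → ℝ :=
  fun p => (a (p.2 o) o o)⁻¹

/-- The coefficient `a^{jk} / a^{oo}` of `∂_j ∂_k` after dividing `L₀` by `a^{oo}`. -/
noncomputable def spaceCoeff {d : ℕ} (o : Fin d) (a : ℝ → Fin d → Fin d → ℝ) (j k : Fin d) :
    ℝ × (Fin d → ℝ) → ℝ :=
  fun p => a (p.2 o) j k * (a (p.2 o) o o)⁻¹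

lemma timeCoeff_mul_parabolicOp {d : ℕ} (o : Fin d) (a : ℝ → Fin d → Fin d → ℝ)
    (w : ℝ × (Fin d → ℝ) → ℝ) (p : ℝ × (Fin d → ℝ)) :
    timeCoeff o a p * parabolicOp o a w p =
      timeCoeff o a p * pdt w p + ∑ j, ∑ k, spaceCoeff o a j k p * pdxx j k w p := by
  simp only [parabolicOp, mul_add, Finset.mul_sum, spaceCoeff, timeCoeff]
  congr! 3
  ring

namespace IsUniformlyElliptic

variable {d : ℕ} {δ : ℝ} {a : ℝ → Fin d → Fin d → ℝ}

lemma le_diag (ha : IsUniformlyElliptic δ a) (s : ℝ) (i : Fin d) : δ ≤ a s i i := by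
  simpa [Pi.single_apply] using ha.le_quadForm s (Pi.single i 1)

lemma diag_le (ha : IsUniformlyElliptic δ a) (s : ℝ) (i : Fin d) : a s i i ≤ δ⁻¹ := by
  simpa [Pi.single_apply] using ha.quadForm_le s (Pi.single i 1)

lemma diag_pos (ha : IsUniformlyElliptic δ a) (s : ℝ) (i : Fin d) : 0 < a s i i :=
  ha.pos.trans_le (ha.le_diag s i)

lemma quadForm_single_add_single (ha : IsUniformlyElliptic δ a) (s c : ℝ) (j k : Fin d) :
    ∑ i, ∑ l, a s i l * (Pi.single j 1 + Pi.single k c : Fin d → ℝ) i *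
      (Pi.single j 1 + Pi.single k c : Fin d → ℝ) l
        = a s j j + 2 * c * a s j k + c ^ 2 * a s k k := by
  simp only [Pi.add_apply, mul_add, add_mul, Finset.sum_add_distrib, Pi.single_apply, mul_ite,
    ite_mul, mul_one, mul_zero, zero_mul, Finset.sum_ite_eq', Finset.mem_univ, if_true]
  rw [ha.symm s k j]
  ring

lemma abs_le (ha : IsUniformlyElliptic δ a) (s : ℝ) (j k : Fin d) : |a s j k| ≤ δ⁻¹ := by
  have hnonneg (c : ℝ) : 0 ≤ a s j j + 2 * c * a s j k + c ^ 2 * a s k k := by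
    rw [← ha.quadForm_single_add_single]
    exact (mul_nonneg ha.pos.le (Finset.sum_nonneg fun _ _ => sq_nonneg _)).trans
      (ha.le_quadForm s _)
  have hj := ha.diag_le s j
  have hk := ha.diag_le s k
  rw [_root_.abs_le]
  constructor <;> linarith [hnonneg 1, hnonneg (-1)]

lemma contDiff_inv_diag (ha : IsUniformlyElliptic δ a) (o : Fin d) :
    ContDiff ℝ ∞ fun s => (a s o o)⁻¹ :=
  (ha.contDiff o o).inv fun s => (ha.diag_pos s o).ne'

lemma contDiff_mul_inv_diag (ha : IsUniformlyElliptic δ a) (o j k : Fin d) :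
    ContDiff ℝ ∞ fun s => a s j k * (a s o o)⁻¹ :=
  (ha.contDiff j k).mul (ha.contDiff_inv_diag o)

lemma contDiff_coeff (ha : IsUniformlyElliptic δ a) (o j k : Fin d) :
    ContDiff ℝ ∞ fun p : ℝ × (Fin d → ℝ) => a (p.2 o) j k :=
  (ha.contDiff j k).comp (by fun_prop : ContDiff ℝ ∞ fun p : ℝ × (Fin d → ℝ) => p.2 o)

@[fun_prop]
lemma contDiff_timeCoeff (ha : IsUniformlyElliptic δ a) (o : Fin d) :
    ContDiff ℝ ∞ (timeCoeff o a) :=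
  (ha.contDiff_inv_diag o).comp (by fun_prop : ContDiff ℝ ∞ fun p : ℝ × (Fin d → ℝ) => p.2 o)

@[fun_prop]
lemma contDiff_spaceCoeff (ha : IsUniformlyElliptic δ a) (o j k : Fin d) :
    ContDiff ℝ ∞ (spaceCoeff o a j k) :=
  (ha.contDiff_mul_inv_diag o j k).comp
    (by fun_prop : ContDiff ℝ ∞ fun p : ℝ × (Fin d → ℝ) => p.2 o)

@[fun_prop]
lemma continuous_timeCoeff (ha : IsUniformlyElliptic δ a) (o : Fin d) :
    Continuous (timeCoeff o a) :=
  (ha.contDiff_timeCoeff o).continuous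

@[fun_prop]
lemma continuous_spaceCoeff (ha : IsUniformlyElliptic δ a) (o j k : Fin d) :
    Continuous (spaceCoeff o a j k) :=
  (ha.contDiff_spaceCoeff o j k).continuous

lemma le_timeCoeff (ha : IsUniformlyElliptic δ a) (o : Fin d) (p : ℝ × (Fin d → ℝ)) :
    δ ≤ timeCoeff o a p :=
  (le_inv_comm₀ ha.pos (ha.diag_pos _ o)).2 (ha.diag_le _ o)

lemma timeCoeff_pos (ha : IsUniformlyElliptic δ a) (o : Fin d) (p : ℝ × (Fin d → ℝ)) :
    0 < timeCoeff o a p :=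
  ha.pos.trans_le (ha.le_timeCoeff o p)

lemma timeCoeff_le (ha : IsUniformlyElliptic δ a) (o : Fin d) (p : ℝ × (Fin d → ℝ)) :
    timeCoeff o a p ≤ δ⁻¹ :=
  inv_anti₀ ha.pos (ha.le_diag _ o)

lemma abs_spaceCoeff_le (ha : IsUniformlyElliptic δ a) (o j k : Fin d) (p : ℝ × (Fin d → ℝ)) :
    |spaceCoeff o a j k p| ≤ δ⁻¹ ^ 2 := by
  have hc : |timeCoeff o a p| ≤ δ⁻¹ := by
    simpa only [abs_of_pos (ha.timeCoeff_pos o p)] using ha.timeCoeff_le o p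
  calc |spaceCoeff o a j k p| = |a (p.2 o) j k| * |timeCoeff o a p| := abs_mul _ _
    _ ≤ δ⁻¹ * δ⁻¹ :=
      mul_le_mul (ha.abs_le _ j k) hc (abs_nonneg _) (inv_nonneg.2 ha.pos.le)
    _ = δ⁻¹ ^ 2 := (sq _).symm

lemma le_spaceCoeff_quadForm (ha : IsUniformlyElliptic δ a) (o : Fin d)
    (p : ℝ × (Fin d → ℝ)) (θ : Fin d → ℝ) :
    δ ^ 2 * ∑ j, θ j ^ 2 ≤ ∑ j, ∑ k, spaceCoeff o a j k p * (θ j * θ k) := by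
  calc δ ^ 2 * ∑ j, θ j ^ 2 = δ * (δ * ∑ j, θ j ^ 2) := by ring
    _ ≤ timeCoeff o a p * ∑ j, ∑ k, a (p.2 o) j k * θ j * θ k :=
      mul_le_mul (ha.le_timeCoeff o p) (ha.le_quadForm _ θ)
        (mul_nonneg ha.pos.le (Finset.sum_nonneg fun _ _ => sq_nonneg _))
        (ha.timeCoeff_pos o p).le
    _ = ∑ j, ∑ k, spaceCoeff o a j k p * (θ j * θ k) := by
      simp only [Finset.mul_sum, spaceCoeff, timeCoeff]
      congr! 2
      ring

lemma spaceCoeff_self (ha : IsUniformlyElliptic δ a) (o : Fin d) (p : ℝ × (Fin d → ℝ)) :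
    spaceCoeff o a o o p = 1 :=
  mul_inv_cancel₀ (ha.diag_pos _ o).ne'

lemma pdt_timeCoeff (ha : IsUniformlyElliptic δ a) (o : Fin d) :
    pdt (timeCoeff o a) = fun _ => 0 :=
  pdt_comp_coord ((ha.contDiff_inv_diag o).differentiable (by simp)) o

lemma pdx_timeCoeff (ha : IsUniformlyElliptic δ a) {o k : Fin d} (hk : k ≠ o) :
    pdx k (timeCoeff o a) = fun _ => 0 :=
  pdx_comp_coord ((ha.contDiff_inv_diag o).differentiable (by simp)) hk

lemma pdx_spaceCoeff (ha : IsUniformlyElliptic δ a) {o i : Fin d} (hi : i ≠ o) (j k : Fin d) :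
    pdx i (spaceCoeff o a j k) = fun _ => 0 :=
  pdx_comp_coord ((ha.contDiff_mul_inv_diag o j k).differentiable (by simp)) hi

@[fun_prop]
lemma contDiff_parabolicOp (ha : IsUniformlyElliptic δ a) (o : Fin d)
    {w : ℝ × (Fin d → ℝ) → ℝ} (hw : ContDiff ℝ ∞ w) : ContDiff ℝ ∞ (parabolicOp o a w) :=
  (contDiff_pdt hw).add (ContDiff.sum fun j _ => ContDiff.sum fun k _ =>
    (ha.contDiff_coeff o j k).mul (contDiff_pdxx hw j k))

@[fun_prop]
lemma continuous_parabolicOp (ha : IsUniformlyElliptic δ a) (o : Fin d)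
    {w : ℝ × (Fin d → ℝ) → ℝ} (hw : ContDiff ℝ ∞ w) : Continuous (parabolicOp o a w) :=
  (ha.contDiff_parabolicOp o hw).continuous

lemma parabolicOp_fderiv_apply (ha : IsUniformlyElliptic δ a) {o : Fin d}
    {w : ℝ × (Fin d → ℝ) → ℝ} (hw : ContDiff ℝ ∞ w) {e : ℝ × (Fin d → ℝ)} (he : e.2 o = 0) :
    parabolicOp o a (fun p => fderiv ℝ w p e) = fun p => fderiv ℝ (parabolicOp o a w) p e := by
  have hterm (j k : Fin d) :
      Differentiable ℝ fun p : ℝ × (Fin d → ℝ) => a (p.2 o) j k * pdxx j k w p :=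
    ((ha.contDiff_coeff o j k).mul (contDiff_pdxx hw j k)).differentiable (by simp)
  have hcoeff (j k : Fin d) (p : ℝ × (Fin d → ℝ)) :
      fderiv ℝ (fun q : ℝ × (Fin d → ℝ) => a (q.2 o) j k) p e = 0 := by
    rw [fderiv_comp_coord_apply ((ha.contDiff j k).differentiable (by simp)), he, zero_mul]
  have hcomm (j k : Fin d) :
      pdxx j k (fun p => fderiv ℝ w p e) = fun p => fderiv ℝ (pdxx j k w) p e := by
    have hk : pdx k (fun p => fderiv ℝ w p e) = fun p => fderiv ℝ (pdx k w) p e :=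
      funext fun _ => fderiv_fderiv_apply_comm hw _ _ _
    rw [pdxx, hk]
    exact funext fun _ => fderiv_fderiv_apply_comm (contDiff_pdx hw k) _ _ _
  funext p
  change _ = fderiv ℝ (fun q => pdt w q + ∑ j, ∑ k, a (q.2 o) j k * pdxx j k w q) p e
  rw [fderiv_fun_add (differentiable_pdt hw p)
    (DifferentiableAt.fun_sum fun j _ => DifferentiableAt.fun_sum fun k _ => hterm j k p),
    fderiv_fun_sum fun j _ => DifferentiableAt.fun_sum fun k _ => hterm j k p]
  simp only [parabolicOp, add_apply, sum_apply]
  congr 1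
  · exact fderiv_fderiv_apply_comm hw _ _ _
  refine Finset.sum_congr rfl fun j _ => ?_
  rw [fderiv_fun_sum fun k _ => hterm j k p, sum_apply]
  refine Finset.sum_congr rfl fun k _ => ?_
  rw [fderiv_fun_mul (((ha.contDiff_coeff o j k).differentiable (by simp)) p)
    ((contDiff_pdxx hw j k).differentiable (by simp) p)]
  simp [hcoeff, hcomm]

lemma parabolicOp_pdt (ha : IsUniformlyElliptic δ a) (o : Fin d)
    {w : ℝ × (Fin d → ℝ) → ℝ} (hw : ContDiff ℝ ∞ w) :
    parabolicOp o a (pdt w) = pdt (parabolicOp o a w) :=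
  ha.parabolicOp_fderiv_apply hw rfl

lemma parabolicOp_pdx (ha : IsUniformlyElliptic δ a) {o : Fin d}
    {w : ℝ × (Fin d → ℝ) → ℝ} (hw : ContDiff ℝ ∞ w) {i : Fin d} (hi : i ≠ o) :
    parabolicOp o a (pdx i w) = pdx i (parabolicOp o a w) :=
  ha.parabolicOp_fderiv_apply hw (Pi.single_eq_of_ne hi.symm 1)

end IsUniformlyElliptic

/-! ### Energy inequality -/

/-- For the coefficient `a^{jk} / a^{oo}`, the one of the indices `j, k` in whose direction the
coefficient is constant: an index other than `o`, if there is one. If both are `o`, the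
coefficient is `1`. The operator `∑ (a^{jk} / a^{oo}) ∂_j ∂_k` takes divergence form when this
derivative is put outside the coefficient. -/
def outerIndex {d : ℕ} (o j k : Fin d) : Fin d := if k = o then j else k

/-- The index of the pair `j, k` that remains once `outerIndex` is taken away. -/
def innerIndex {d : ℕ} (o j k : Fin d) : Fin d := if k = o then k else j

/-- The component `(a^{jk} / a^{oo}) ζ² V V_x` of the energy flux of `V` with weight `ζ²`, where `x`
is the coordinate `innerIndex o j k`. -/
noncomputable def energyFlux {d : ℕ} (o : Fin d) (a : ℝ → Fin d → Fin d → ℝ)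
    (ζ V : ℝ × (Fin d → ℝ) → ℝ) (j k : Fin d) : ℝ × (Fin d → ℝ) → ℝ :=
  fun p => spaceCoeff o a j k p * ((ζ p * V p) * (ζ p * pdx (innerIndex o j k) V p))

/-- The energy density `ζ² V² / a^{oo}` of `V` with weight `ζ²`. -/
noncomputable def energyDensity {d : ℕ} (o : Fin d) (a : ℝ → Fin d → Fin d → ℝ)
    (ζ V : ℝ × (Fin d → ℝ) → ℝ) : ℝ × (Fin d → ℝ) → ℝ :=
  fun p => timeCoeff o a p * ((ζ p * V p) * (ζ p * V p))

section Energy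

variable {d : ℕ} {o : Fin d} {δ : ℝ} {a : ℝ → Fin d → Fin d → ℝ} {R : ℝ}
  {ζ V v : ℝ × (Fin d → ℝ) → ℝ}

lemma pdxx_eq_pdx_outerIndex_pdx_innerIndex (hV : ContDiff ℝ ∞ V) (o j k : Fin d) :
    pdxx j k V = pdx (outerIndex o j k) (pdx (innerIndex o j k) V) := by
  unfold outerIndex innerIndex pdxx
  split_ifs
  · rfl
  · exact pdx_pdx_comm hV j k

lemma pdx_outerIndex_mul_pdx_innerIndex (o j k : Fin d) (p : ℝ × (Fin d → ℝ)) :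
    pdx (outerIndex o j k) V p * pdx (innerIndex o j k) V p = pdx j V p * pdx k V p := by
  unfold outerIndex innerIndex
  split_ifs
  · rfl
  · exact mul_comm _ _

lemma pdx_outerIndex_spaceCoeff (ha : IsUniformlyElliptic δ a) (o j k : Fin d) :
    pdx (outerIndex o j k) (spaceCoeff o a j k) = fun _ => 0 := by
  unfold outerIndex
  split_ifs with hk
  · subst hk
    rcases eq_or_ne j k with rfl | hj
    · rw [funext (ha.spaceCoeff_self j)]
      exact funext fun p => by simp [pdx]
    · exact ha.pdx_spaceCoeff hj j k
  · exact ha.pdx_spaceCoeff hk j k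

@[fun_prop]
lemma contDiff_energyFlux (ha : IsUniformlyElliptic δ a) (o : Fin d) (hζ : ContDiff ℝ ∞ ζ)
    (hV : ContDiff ℝ ∞ V) (j k : Fin d) : ContDiff ℝ ∞ (energyFlux o a ζ V j k) :=
  (ha.contDiff_spaceCoeff o j k).mul ((hζ.mul hV).mul (hζ.mul (contDiff_pdx hV _)))

@[fun_prop]
lemma contDiff_energyDensity (ha : IsUniformlyElliptic δ a) (o : Fin d) (hζ : ContDiff ℝ ∞ ζ)
    (hV : ContDiff ℝ ∞ V) : ContDiff ℝ ∞ (energyDensity o a ζ V) :=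
  (ha.contDiff_timeCoeff o).mul ((hζ.mul hV).mul (hζ.mul hV))

lemma pdt_energyDensity (ha : IsUniformlyElliptic δ a) (o : Fin d) (hζ : ContDiff ℝ ∞ ζ)
    (hV : ContDiff ℝ ∞ V) (p : ℝ × (Fin d → ℝ)) :
    pdt (energyDensity o a ζ V) p = 2 * (timeCoeff o a p * ζ p * pdt ζ p * V p ^ 2)
      + 2 * (ζ p ^ 2 * V p * (timeCoeff o a p * pdt V p)) := by
  have hc := (ha.contDiff_timeCoeff o).differentiable (by simp)
  have hζ' := hζ.differentiable (by simp)
  have hV' := hV.differentiable (by simp)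
  unfold energyDensity
  simp (disch := fun_prop) only [pdt_mul, ha.pdt_timeCoeff]
  ring

lemma pdx_outerIndex_energyFlux (ha : IsUniformlyElliptic δ a) (o : Fin d)
    (hζ : ContDiff ℝ ∞ ζ) (hV : ContDiff ℝ ∞ V) (j k : Fin d) (p : ℝ × (Fin d → ℝ)) :
    pdx (outerIndex o j k) (energyFlux o a ζ V j k) p =
      2 * ζ p * V p * (spaceCoeff o a j k p *
          (pdx (outerIndex o j k) ζ p * pdx (innerIndex o j k) V p))
        + ζ p ^ 2 * V p * (spaceCoeff o a j k p * pdxx j k V p)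
        + ζ p ^ 2 * (spaceCoeff o a j k p * (pdx j V p * pdx k V p)) := by
  have hb := (ha.contDiff_spaceCoeff o j k).differentiable (by simp)
  have hζ' := hζ.differentiable (by simp)
  have hV' := hV.differentiable (by simp)
  unfold energyFlux
  simp (disch := fun_prop) only [pdx_mul, pdx_outerIndex_spaceCoeff ha,
    pdxx_eq_pdx_outerIndex_pdx_innerIndex hV o, ← pdx_outerIndex_mul_pdx_innerIndex o j k p]
  ring

lemma energy_identity (ha : IsUniformlyElliptic δ a) (o : Fin d) (hζ : ContDiff ℝ ∞ ζ)
    (hV : ContDiff ℝ ∞ V) (p : ℝ × (Fin d → ℝ)) :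
    ζ p ^ 2 * ∑ j, ∑ k, spaceCoeff o a j k p * (pdx j V p * pdx k V p) =
      (-(timeCoeff o a p * ζ p * pdt ζ p * V p ^ 2)
        - 2 * ζ p * V p * (∑ j, ∑ k, spaceCoeff o a j k p *
            (pdx (outerIndex o j k) ζ p * pdx (innerIndex o j k) V p))
        - ζ p ^ 2 * V p * (timeCoeff o a p * parabolicOp o a V p))
      + (∑ j, ∑ k, pdx (outerIndex o j k) (energyFlux o a ζ V j k) p)
      + 1 / 2 * pdt (energyDensity o a ζ V) p := by
  simp only [pdt_energyDensity ha o hζ hV, pdx_outerIndex_energyFlux ha o hζ hV,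
    timeCoeff_mul_parabolicOp, Finset.sum_add_distrib, ← Finset.mul_sum]
  ring

lemma integral_energy_le (ha : IsUniformlyElliptic δ a) (o : Fin d) (hR : 0 ≤ R)
    (hζ : ContDiff ℝ ∞ ζ) (hV : ContDiff ℝ ∞ V) (h0 : ∀ p ∈ pbQc d R, ζ p * V p = 0) :
    ∫ p in Qc d R, ζ p ^ 2 * ∑ j, ∑ k, spaceCoeff o a j k p * (pdx j V p * pdx k V p) ≤
    ∫ p in Qc d R, (-(timeCoeff o a p * ζ p * pdt ζ p * V p ^ 2)
      - 2 * ζ p * V p * (∑ j, ∑ k, spaceCoeff o a j k p *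
          (pdx (outerIndex o j k) ζ p * pdx (innerIndex o j k) V p))
      - ζ p ^ 2 * V p * (timeCoeff o a p * parabolicOp o a V p)) := by
  have hflux : ∫ p in Qc d R, ∑ j, ∑ k, pdx (outerIndex o j k) (energyFlux o a ζ V j k) p = 0 := by
    rw [integral_Qc_sum _ hR fun j => by fun_prop]
    refine Finset.sum_eq_zero fun j _ => ?_
    rw [integral_Qc_sum _ hR fun k => by fun_prop]
    refine Finset.sum_eq_zero fun k _ =>
      integral_Qc_pdx_eq_zero (contDiff_energyFlux ha o hζ hV j k) _ hR fun p hp => ?_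
    simp [energyFlux, h0 p hp]
  have hdensity : ∫ p in Qc d R, pdt (energyDensity o a ζ V) p ≤ 0 :=
    integral_Qc_pdt_nonpos (contDiff_energyDensity ha o hζ hV) hR
      (fun p hp => by simp [energyDensity, h0 p hp])
      (fun p => mul_nonneg (ha.timeCoeff_pos o p).le (mul_self_nonneg _))
  have hζ' := hζ.continuous
  have hV' := hV.continuous
  simp only [energy_identity ha o hζ hV]
  rw [integral_Qc_add hR (by fun_prop) (by fun_prop),
    integral_Qc_add hR (by fun_prop) (by fun_prop), hflux, integral_const_mul]
  linarith

lemma integral_sq_le_integral_pdx_sq (hv : ContDiff ℝ ∞ v) (o : Fin d)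
    (h0 : ∀ p ∈ pbQc d 1, v p = 0) :
    ∫ p in Qc d 1, v p ^ 2 ≤ 4 * ∫ p in Qc d 1, pdx o v p ^ 2 := by
  have hcoord : ContDiff ℝ ∞ fun p : ℝ × (Fin d → ℝ) => p.2 o := by fun_prop
  have hv' := hv.differentiable (by simp)
  have hvc := hv.continuous
  have hdiv : ∫ p in Qc d 1, pdx o (fun p => p.2 o * (v p * v p)) p = 0 :=
    integral_Qc_pdx_eq_zero (hcoord.mul (hv.mul hv)) _ zero_le_one fun p hp => by simp [h0 p hp]
  simp (disch := fun_prop) only [pdx_mul, pdx_coord] at hdiv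
  have hyoung : ∫ p in Qc d 1, (1 / 2 * v p ^ 2 - 2 * pdx o v p ^ 2) ≤ 0 := by
    rw [← hdiv]
    refine integral_Qc_mono zero_le_one (by fun_prop) (by fun_prop) fun p hp => ?_
    have hcoord_le : |p.2 o| ≤ 1 :=
      (norm_le_pi_norm p.2 o).trans
        (mem_closedBall_zero_iff.1 (ballE_subset_closedBall zero_le_one hp.2))
    have hcoord_sq : p.2 o ^ 2 ≤ 1 := (sq_le_one_iff_abs_le_one _).2 hcoord_le
    nlinarith [sq_nonneg (v p + 2 * (p.2 o * pdx o v p)),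
      mul_le_mul_of_nonneg_right hcoord_sq (sq_nonneg (pdx o v p))]
  rw [integral_Qc_sub zero_le_one (by fun_prop) (by fun_prop), integral_const_mul,
    integral_const_mul] at hyoung
  linarith

lemma integral_pdx_sq_le_of_eq_zero (ha : IsUniformlyElliptic δ a) (o : Fin d)
    (hv : ContDiff ℝ ∞ v) (h0 : ∀ p ∈ pbQc d 1, v p = 0) :
    δ ^ 2 * ∫ p in Qc d 1, pdx o v p ^ 2 ≤
      δ ^ 2 / 8 * (∫ p in Qc d 1, v p ^ 2)
        + 2 * δ⁻¹ ^ 4 * ∫ p in Qc d 1, parabolicOp o a v p ^ 2 := by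
  have hδ := ha.pos
  have hvc := hv.continuous
  have henergy := integral_energy_le ha o zero_le_one (ζ := fun _ => 1) contDiff_const hv
    (fun p hp => by simp [h0 p hp])
  have hpdx1 (j : Fin d) : pdx j (fun _ => (1 : ℝ)) = fun _ => 0 := funext fun p => by simp [pdx]
  have hpdt1 : pdt (d := d) (fun _ => (1 : ℝ)) = fun _ => 0 := funext fun p => by simp [pdt]
  simp only [hpdx1, hpdt1, mul_zero, zero_mul, Finset.sum_const_zero, neg_zero, sub_zero, zero_sub,
    one_pow, one_mul] at henergy
  rw [← integral_const_mul, ← integral_const_mul, ← integral_const_mul,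
    ← integral_Qc_add zero_le_one (by fun_prop) (by fun_prop)]
  refine (integral_Qc_mono zero_le_one (by fun_prop) (by fun_prop) fun p _ => ?_).trans
    (henergy.trans (integral_Qc_mono zero_le_one (by fun_prop) (by fun_prop) fun p _ => ?_))
  · refine le_trans ?_ (ha.le_spaceCoeff_quadForm o p fun j => pdx j v p)
    gcongr
    exact Finset.single_le_sum (f := fun j => pdx j v p ^ 2) (fun j _ => sq_nonneg _)
      (Finset.mem_univ o)
  · have hsource : (timeCoeff o a p * parabolicOp o a v p) ^ 2
        ≤ δ⁻¹ ^ 2 * parabolicOp o a v p ^ 2 := by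
      rw [mul_pow]
      gcongr
      · exact (ha.timeCoeff_pos o p).le
      · exact ha.timeCoeff_le o p
    have hyoung := two_mul_le_add_mul_sq (a := v p)
      (b := -(timeCoeff o a p * parabolicOp o a v p)) (ε := δ ^ 2 / 4) (by positivity)
    have hscaled := mul_le_mul_of_nonneg_left hsource (by positivity : 0 ≤ 2 * δ⁻¹ ^ 2)
    have hinv : (δ ^ 2 / 4)⁻¹ = 4 * δ⁻¹ ^ 2 := by field_simp
    rw [hinv] at hyoung
    linarith

lemma integral_sq_le_of_eq_zero (ha : IsUniformlyElliptic δ a) (o : Fin d)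
    (hv : ContDiff ℝ ∞ v) (h0 : ∀ p ∈ pbQc d 1, v p = 0) :
    ∫ p in Qc d 1, v p ^ 2 ≤ 16 * δ⁻¹ ^ 6 * ∫ p in Qc d 1, parabolicOp o a v p ^ 2 := by
  have hδ := ha.pos
  have hpoincare := mul_le_mul_of_nonneg_left (integral_sq_le_integral_pdx_sq hv o h0)
    (sq_nonneg δ)
  have henergy := integral_pdx_sq_le_of_eq_zero ha o hv h0
  have habsorbed : δ ^ 2 * ∫ p in Qc d 1, v p ^ 2
      ≤ 16 * δ⁻¹ ^ 4 * ∫ p in Qc d 1, parabolicOp o a v p ^ 2 := by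
    linarith
  calc ∫ p in Qc d 1, v p ^ 2 = δ⁻¹ ^ 2 * (δ ^ 2 * ∫ p in Qc d 1, v p ^ 2) := by field_simp
    _ ≤ δ⁻¹ ^ 2 * (16 * δ⁻¹ ^ 4 * ∫ p in Qc d 1, parabolicOp o a v p ^ 2) := by gcongr
    _ = 16 * δ⁻¹ ^ 6 * ∫ p in Qc d 1, parabolicOp o a v p ^ 2 := by ring

end Energy

/-! ### Caccioppoli inequalities -/

lemma sq_sum_mul_le_card_mul {ι : Type*} (s : Finset ι) {x : ι → ℝ} (y : ι → ℝ) {B : ℝ}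
    (hx : ∀ i ∈ s, |x i| ≤ B) :
    (∑ i ∈ s, x i * y i) ^ 2 ≤ s.card * B ^ 2 * ∑ i ∈ s, y i ^ 2 := by
  refine (Finset.sum_mul_sq_le_sq_mul_sq s x y).trans ?_
  gcongr
  rw [← nsmul_eq_mul]
  exact Finset.sum_le_card_nsmul _ _ _ fun i hi =>
    (sq_abs (x i)).symm.trans_le (pow_le_pow_left₀ (abs_nonneg _) (hx i hi) 2)

/-- The squared length of the spatial gradient. -/
noncomputable def gradSq {d : ℕ} (w : ℝ × (Fin d → ℝ) → ℝ) : ℝ × (Fin d → ℝ) → ℝ :=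
  fun p => ∑ j, pdx j w p ^ 2

/-- `ζ` is a smooth cutoff function between `Q_ρ` and `Q_R`: it is `1` on `Q_ρ` and `0` on `∂'Q_R`,
and `M` bounds it and its first derivatives in `Q_R`. -/
structure IsCutoff {d : ℕ} (ρ R M : ℝ) (ζ : ℝ × (Fin d → ℝ) → ℝ) : Prop where
  one_le : 1 ≤ M
  contDiff : ContDiff ℝ ∞ ζ
  eq_one : ∀ p ∈ Qc d ρ, ζ p = 1
  eq_zero : ∀ p ∈ pbQc d R, ζ p = 0
  abs_le : ∀ p ∈ Qc d R, |ζ p| ≤ M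
  abs_pdt_le : ∀ p ∈ Qc d R, |pdt ζ p| ≤ M
  abs_pdx_le : ∀ p ∈ Qc d R, ∀ j, |pdx j ζ p| ≤ M

section Caccioppoli

variable {d : ℕ} {o : Fin d} {δ : ℝ} {a : ℝ → Fin d → Fin d → ℝ} {ρ R M : ℝ}
  {ζ V w g : ℝ × (Fin d → ℝ) → ℝ}

@[fun_prop] lemma continuous_gradSq (hw : ContDiff ℝ ∞ w) : Continuous (gradSq w) := by
  unfold gradSq
  fun_prop

lemma gradSq_nonneg (w : ℝ × (Fin d → ℝ) → ℝ) (p : ℝ × (Fin d → ℝ)) : 0 ≤ gradSq w p :=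
  Finset.sum_nonneg fun _ _ => sq_nonneg _

lemma pdx_sq_le_gradSq (j : Fin d) (w : ℝ × (Fin d → ℝ) → ℝ) (p : ℝ × (Fin d → ℝ)) :
    pdx j w p ^ 2 ≤ gradSq w p :=
  Finset.single_le_sum (f := fun j => pdx j w p ^ 2) (fun _ _ => sq_nonneg _) (Finset.mem_univ j)

lemma exists_forall_Qc_abs_le (hR : 0 ≤ R) (hζ : ContDiff ℝ ∞ ζ) :
    ∃ M, ∀ p ∈ Qc d R, |ζ p| ≤ M ∧ |pdt ζ p| ≤ M ∧ ∀ j, |pdx j ζ p| ≤ M := by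
  have hcont := hζ.continuous
  have hsum : Continuous fun p => |ζ p| + |pdt ζ p| + ∑ j, |pdx j ζ p| := by fun_prop
  obtain ⟨M, hM⟩ := (isCompact_box d R).exists_bound_of_continuousOn hsum.continuousOn
  refine ⟨M, fun p hp => ?_⟩
  have hle := (le_abs_self _).trans (hM p (Qc_subset_box hR hp))
  have hpdx : 0 ≤ ∑ j, |pdx j ζ p| := Finset.sum_nonneg fun _ _ => abs_nonneg _
  refine ⟨by linarith [abs_nonneg (pdt ζ p)], by linarith [abs_nonneg (ζ p)], fun j => ?_⟩
  linarith [abs_nonneg (pdt ζ p), abs_nonneg (ζ p),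
    Finset.single_le_sum (f := fun j => |pdx j ζ p|) (fun _ _ => abs_nonneg _) (Finset.mem_univ j)]

lemma exists_isCutoff (d : ℕ) (hρ : 0 ≤ ρ) (hρR : ρ < R) :
    ∃ (ζ : ℝ × (Fin d → ℝ) → ℝ) (M : ℝ), IsCutoff ρ R M ζ := by
  have hD : 0 < R ^ 2 - ρ ^ 2 := sub_pos.2 (pow_lt_pow_left₀ hρR hρ two_ne_zero)
  set ζ : ℝ × (Fin d → ℝ) → ℝ := fun p =>
    Real.smoothTransition ((R ^ 2 - p.1) / (R ^ 2 - ρ ^ 2)) *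
      Real.smoothTransition ((R ^ 2 - ∑ j, p.2 j ^ 2) / (R ^ 2 - ρ ^ 2)) with hζ
  have hsmooth : ContDiff ℝ ∞ ζ :=
    (Real.smoothTransition.contDiff.comp (by fun_prop)).mul
      (Real.smoothTransition.contDiff.comp (by fun_prop))
  obtain ⟨M, hM⟩ := exists_forall_Qc_abs_le (hρ.trans hρR.le) hsmooth
  refine ⟨ζ, max 1 M, le_max_left _ _, hsmooth, ?_, ?_,
    fun p hp => le_max_of_le_right (hM p hp).1, fun p hp => le_max_of_le_right (hM p hp).2.1,
    fun p hp j => le_max_of_le_right ((hM p hp).2.2 j)⟩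
  · rintro p ⟨⟨-, ht⟩, hx : ∑ j, p.2 j ^ 2 < ρ ^ 2⟩
    simp only [hζ]
    rw [Real.smoothTransition.one_of_one_le, Real.smoothTransition.one_of_one_le, one_mul]
    · rw [le_div_iff₀ hD]
      linarith
    · rw [le_div_iff₀ hD]
      linarith
  · rintro p (⟨-, hx : ∑ j, p.2 j ^ 2 = R ^ 2⟩ | ⟨ht : p.1 = R ^ 2, -⟩)
    · simp [hζ, hx]
    · simp [hζ, ht]

lemma IsCutoff.sq_le (hζ : IsCutoff ρ R M ζ) {p : ℝ × (Fin d → ℝ)} (hp : p ∈ Qc d R) :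
    ζ p ^ 2 ≤ M ^ 2 :=
  (sq_abs (ζ p)).symm.trans_le (pow_le_pow_left₀ (abs_nonneg _) (hζ.abs_le p hp) 2)

lemma sq_sum_spaceCoeff_mul_le (ha : IsUniformlyElliptic δ a) (hζ : IsCutoff ρ R M ζ)
    {p : ℝ × (Fin d → ℝ)} (hp : p ∈ Qc d R) :
    (∑ j, ∑ k, spaceCoeff o a j k p *
        (pdx (outerIndex o j k) ζ p * pdx (innerIndex o j k) V p)) ^ 2 ≤
      d ^ 4 * δ⁻¹ ^ 4 * M ^ 2 * gradSq V p := by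
  have hδ := ha.pos
  have hM := hζ.one_le
  have hcoeff (q : Fin d × Fin d) (_ : q ∈ Finset.univ) :
      |spaceCoeff o a q.1 q.2 p * pdx (outerIndex o q.1 q.2) ζ p| ≤ δ⁻¹ ^ 2 * M := by
    rw [abs_mul]
    have hb := ha.abs_spaceCoeff_le o q.1 q.2 p
    have hdζ := hζ.abs_pdx_le p hp (outerIndex o q.1 q.2)
    gcongr
  have hgrad : ∑ q : Fin d × Fin d, pdx (innerIndex o q.1 q.2) V p ^ 2
      ≤ (d * d) * gradSq V p := by
    refine (Finset.sum_le_card_nsmul _ _ _ fun q _ => pdx_sq_le_gradSq _ V p).trans_eq ?_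
    simp
  have hsum := sq_sum_mul_le_card_mul Finset.univ
    (fun q : Fin d × Fin d => pdx (innerIndex o q.1 q.2) V p) hcoeff
  rw [Fintype.sum_prod_type] at hsum
  simp only [mul_assoc, Finset.card_univ, Fintype.card_prod, Fintype.card_fin] at hsum
  calc _ ≤ _ := hsum
    _ ≤ ((d * d : ℕ) : ℝ) * ((δ⁻¹ ^ 2 * M) ^ 2 * ((d * d) * gradSq V p)) := by gcongr
    _ = d ^ 4 * δ⁻¹ ^ 4 * M ^ 2 * gradSq V p := by push_cast; ring

lemma cutoff_error_le (ha : IsUniformlyElliptic δ a) (hζ : IsCutoff ρ R M ζ)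
    {p : ℝ × (Fin d → ℝ)} (hp : p ∈ Qc d R) :
    - (timeCoeff o a p * ζ p * pdt ζ p * V p ^ 2)
      - 2 * ζ p * V p * (∑ j, ∑ k, spaceCoeff o a j k p *
          (pdx (outerIndex o j k) ζ p * pdx (innerIndex o j k) V p)) ≤
      δ ^ 2 / 4 * (ζ p ^ 2 * gradSq V p)
        + (δ⁻¹ * M ^ 2 + 4 * d ^ 4 * δ⁻¹ ^ 6 * M ^ 2) * V p ^ 2 := by
  have hδ := ha.pos
  have hM := hζ.one_le
  have hd : (0 : ℝ) < d := by exact_mod_cast o.pos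
  have htime : - (timeCoeff o a p * ζ p * pdt ζ p * V p ^ 2) ≤ δ⁻¹ * M ^ 2 * V p ^ 2 := by
    have habs : |timeCoeff o a p * ζ p * pdt ζ p| ≤ δ⁻¹ * M * M := by
      rw [abs_mul, abs_mul, abs_of_pos (ha.timeCoeff_pos o p)]
      have hc := ha.timeCoeff_le o p
      have hζp := hζ.abs_le p hp
      have hdζ := hζ.abs_pdt_le p hp
      gcongr
    have := mul_le_mul_of_nonneg_right ((neg_le_abs _).trans habs) (sq_nonneg (V p))
    linarith
  set S := ∑ j, ∑ k, spaceCoeff o a j k p *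
    (pdx (outerIndex o j k) ζ p * pdx (innerIndex o j k) V p)
  have hS : S ^ 2 ≤ d ^ 4 * δ⁻¹ ^ 4 * M ^ 2 * gradSq V p := sq_sum_spaceCoeff_mul_le ha hζ hp
  have hε : 0 < 4 * d ^ 4 * δ⁻¹ ^ 6 * M ^ 2 := by positivity
  have hyoung := two_mul_le_add_mul_sq (a := V p) (b := -(ζ p * S)) hε
  have hspace : (4 * d ^ 4 * δ⁻¹ ^ 6 * M ^ 2)⁻¹ * (-(ζ p * S)) ^ 2
      ≤ δ ^ 2 / 4 * (ζ p ^ 2 * gradSq V p) := by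
    rw [neg_sq, mul_pow, inv_mul_le_iff₀ hε]
    calc ζ p ^ 2 * S ^ 2 ≤ ζ p ^ 2 * (d ^ 4 * δ⁻¹ ^ 4 * M ^ 2 * gradSq V p) := by gcongr
      _ = _ := by field_simp
  linarith

lemma IsCutoff.integral_le (hζ : IsCutoff ρ R M ζ) (hρ : 0 ≤ ρ) (hρR : ρ ≤ R) (hg : Continuous g)
    (hg0 : ∀ p, 0 ≤ g p) : ∫ p in Qc d ρ, g p ≤ ∫ p in Qc d R, ζ p ^ 2 * g p := by
  have hζc := hζ.contDiff.continuous
  calc ∫ p in Qc d ρ, g p = ∫ p in Qc d ρ, ζ p ^ 2 * g p :=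
        setIntegral_congr_fun (isOpen_Qc d ρ).measurableSet fun p hp => by
          simp [hζ.eq_one p hp]
    _ ≤ ∫ p in Qc d R, ζ p ^ 2 * g p :=
        integral_Qc_mono_radius hρ hρR (by fun_prop) fun p => mul_nonneg (sq_nonneg _) (hg0 p)

lemma integral_gradSq_le_of_source_le (ha : IsUniformlyElliptic δ a) (hρ : 0 ≤ ρ) (hρR : ρ ≤ R)
    (hζ : IsCutoff ρ R M ζ) (hV : ContDiff ℝ ∞ V) (hg : Continuous g) {K : ℝ}
    (hsource : ∫ p in Qc d R, -(ζ p ^ 2 * V p * (timeCoeff o a p * parabolicOp o a V p)) ≤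
      ∫ p in Qc d R, (δ ^ 2 / 4 * (ζ p ^ 2 * gradSq V p) + K * (V p ^ 2 + g p ^ 2))) :
    ∫ p in Qc d ρ, gradSq V p ≤
      2 * δ⁻¹ ^ 2 * ((δ⁻¹ * M ^ 2 + 4 * d ^ 4 * δ⁻¹ ^ 6 * M ^ 2) + K) *
        ∫ p in Qc d R, (V p ^ 2 + g p ^ 2) := by
  have hδ := ha.pos
  have hR : 0 ≤ R := hρ.trans hρR
  have hζs := hζ.contDiff
  have hζc := hζs.continuous
  have hVc := hV.continuous
  set C := δ⁻¹ * M ^ 2 + 4 * d ^ 4 * δ⁻¹ ^ 6 * M ^ 2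
  have hC : 0 ≤ C := by positivity
  have hcoercive : ∫ p in Qc d R, δ ^ 2 * (ζ p ^ 2 * gradSq V p) ≤
      ∫ p in Qc d R, ζ p ^ 2 * ∑ j, ∑ k, spaceCoeff o a j k p * (pdx j V p * pdx k V p) := by
    refine integral_Qc_mono hR (by fun_prop) (by fun_prop) fun p _ => ?_
    have hell := mul_le_mul_of_nonneg_left
      (ha.le_spaceCoeff_quadForm o p fun j => pdx j V p) (sq_nonneg (ζ p))
    rwa [mul_left_comm] at hell
  have henergy := integral_energy_le ha o hR hζs hV fun p hp => by simp [hζ.eq_zero p hp]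
  have herror : ∫ p in Qc d R, (-(timeCoeff o a p * ζ p * pdt ζ p * V p ^ 2)
      - 2 * ζ p * V p * (∑ j, ∑ k, spaceCoeff o a j k p *
          (pdx (outerIndex o j k) ζ p * pdx (innerIndex o j k) V p))) ≤
      ∫ p in Qc d R, (δ ^ 2 / 4 * (ζ p ^ 2 * gradSq V p) + C * (V p ^ 2 + g p ^ 2)) :=
    integral_Qc_mono hR (by fun_prop) (by fun_prop) fun p hp => by
      linarith [cutoff_error_le (o := o) (V := V) ha hζ hp, mul_nonneg hC (sq_nonneg (g p))]
  rw [integral_Qc_sub hR (by fun_prop) (by fun_prop)] at henergy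
  rw [integral_Qc_add hR (by fun_prop) (by fun_prop)] at hsource herror
  simp only [integral_neg, integral_const_mul] at hsource herror hcoercive
  refine (hζ.integral_le hρ hρR (continuous_gradSq hV) (gradSq_nonneg V)).trans ?_
  rw [mul_assoc, mul_assoc, ← div_le_iff₀' (by positivity), ← div_le_iff₀' (by positivity)]
  field_simp
  linarith

lemma exists_integral_gradSq_le (o : Fin d) (hδ : 0 < δ) (hρ : 0 ≤ ρ) (hρR : ρ < R) :
    ∃ N : ℝ, 0 ≤ N ∧ ∀ a, IsUniformlyElliptic δ a → ∀ V : ℝ × (Fin d → ℝ) → ℝ, ContDiff ℝ ∞ V →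
      ∫ p in Qc d ρ, gradSq V p ≤ N * ∫ p in Qc d R, (V p ^ 2 + parabolicOp o a V p ^ 2) := by
  obtain ⟨ζ, M, hζ⟩ := exists_isCutoff d hρ hρR
  have hζc := hζ.contDiff.continuous
  have hM := hζ.one_le
  refine ⟨2 * δ⁻¹ ^ 2 * ((δ⁻¹ * M ^ 2 + 4 * d ^ 4 * δ⁻¹ ^ 6 * M ^ 2) + M ^ 2 * δ⁻¹), by positivity,
    fun a ha V hV => integral_gradSq_le_of_source_le (o := o) ha hρ hρR.le hζ hV
      (ha.continuous_parabolicOp o hV) ?_⟩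
  have hVc := hV.continuous
  refine integral_Qc_mono (hρ.trans hρR.le) (by fun_prop) (by fun_prop) fun p hp => ?_
  have hweight : ζ p ^ 2 * timeCoeff o a p ≤ M ^ 2 * δ⁻¹ :=
    mul_le_mul (hζ.sq_le hp) (ha.timeCoeff_le o p) (ha.timeCoeff_pos o p).le (sq_nonneg M)
  have hweight0 : 0 ≤ ζ p ^ 2 * timeCoeff o a p :=
    mul_nonneg (sq_nonneg _) (ha.timeCoeff_pos o p).le
  have hgrad := mul_nonneg (by positivity : 0 ≤ δ ^ 2 / 4)
    (mul_nonneg (sq_nonneg (ζ p)) (gradSq_nonneg V p))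
  calc - (ζ p ^ 2 * V p * (timeCoeff o a p * parabolicOp o a V p))
      = ζ p ^ 2 * timeCoeff o a p * (-(V p * parabolicOp o a V p)) := by ring
    _ ≤ ζ p ^ 2 * timeCoeff o a p * (V p ^ 2 + parabolicOp o a V p ^ 2) := by
        gcongr
        nlinarith [sq_nonneg (V p + parabolicOp o a V p), sq_nonneg (V p),
          sq_nonneg (parabolicOp o a V p)]
    _ ≤ M ^ 2 * δ⁻¹ * (V p ^ 2 + parabolicOp o a V p ^ 2) := by gcongr
    _ ≤ _ := le_add_of_nonneg_left hgrad

lemma integral_tangential_source_eq (ha : IsUniformlyElliptic δ a) (hR : 0 ≤ R)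
    (hζ : IsCutoff ρ R M ζ) (hw : ContDiff ℝ ∞ w) {k : Fin d} (hk : k ≠ o) :
    ∫ p in Qc d R, - (ζ p ^ 2 * pdx k w p * (timeCoeff o a p * parabolicOp o a (pdx k w) p)) =
      ∫ p in Qc d R, timeCoeff o a p * parabolicOp o a w p *
        (2 * ζ p * pdx k ζ p * pdx k w p + ζ p ^ 2 * pdxx k k w p) := by
  have hζs := hζ.contDiff
  have hζc := hζs.continuous
  have hLs := ha.contDiff_parabolicOp o hw
  have hcs := ha.contDiff_timeCoeff o
  have hζd := hζs.differentiable (by simp)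
  have hLd := hLs.differentiable (by simp)
  have hcd := hcs.differentiable (by simp)
  have hdiv := integral_Qc_pdx_eq_zero (R := R)
    (F := fun p => timeCoeff o a p * (parabolicOp o a w p * ((ζ p * ζ p) * pdx k w p)))
    (by fun_prop) k hR fun p hp => by simp [hζ.eq_zero p hp]
  simp (disch := fun_prop) only [pdx_mul, ha.pdx_timeCoeff hk] at hdiv
  rw [ha.parabolicOp_pdx hw hk, ← sub_eq_zero,
    ← integral_Qc_sub hR (by fun_prop) (by fun_prop), ← neg_eq_zero, ← integral_neg, ← hdiv]
  congr 1
  funext p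
  simp only [pdxx]
  ring

lemma abs_two_mul_mul_le (x y : ℝ) : |2 * (x * y)| ≤ y ^ 2 + x ^ 2 := by
  rw [abs_le]
  constructor <;> nlinarith [sq_nonneg (x + y), sq_nonneg (x - y)]

lemma IsUniformlyElliptic.abs_timeCoeff_mul_cutoff_mul_pdx_le (ha : IsUniformlyElliptic δ a)
    (hζ : IsCutoff ρ R M ζ) (k : Fin d) {p : ℝ × (Fin d → ℝ)} (hp : p ∈ Qc d R) :
    |timeCoeff o a p * ζ p * pdx k ζ p| ≤ δ⁻¹ * M ^ 2 := by
  have hδ := ha.pos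
  have hM := hζ.one_le
  rw [abs_mul, abs_mul, abs_of_nonneg (ha.timeCoeff_pos o p).le, sq, ← mul_assoc]
  have hc := ha.timeCoeff_le o p
  have hζp := hζ.abs_le p hp
  have hdζ := hζ.abs_pdx_le p hp k
  gcongr

lemma tangential_source_le (ha : IsUniformlyElliptic δ a) (hζ : IsCutoff ρ R M ζ)
    (k : Fin d) {p : ℝ × (Fin d → ℝ)} (hp : p ∈ Qc d R) :
    timeCoeff o a p * parabolicOp o a w p *
        (2 * ζ p * pdx k ζ p * pdx k w p + ζ p ^ 2 * pdxx k k w p) ≤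
      δ ^ 2 / 4 * (ζ p ^ 2 * gradSq (pdx k w) p) +
        (δ⁻¹ * M ^ 2 + δ⁻¹ ^ 4 * M ^ 2) * (pdx k w p ^ 2 + parabolicOp o a w p ^ 2) := by
  have hδ := ha.pos
  have hM := hζ.one_le
  have hc0 := (ha.timeCoeff_pos o p).le
  have hc := ha.timeCoeff_le o p
  set L := parabolicOp o a w p
  set W := pdx k w p
  have hfirst : 2 * (L * W) * (timeCoeff o a p * ζ p * pdx k ζ p) ≤
      δ⁻¹ * M ^ 2 * (W ^ 2 + L ^ 2) := by
    calc _ ≤ |2 * (L * W)| * |timeCoeff o a p * ζ p * pdx k ζ p| :=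
          (le_abs_self _).trans_eq (abs_mul _ _)
      _ ≤ (W ^ 2 + L ^ 2) * (δ⁻¹ * M ^ 2) := by
          have hcoeff := ha.abs_timeCoeff_mul_cutoff_mul_pdx_le (o := o) hζ k hp
          have hLW := abs_two_mul_mul_le L W
          gcongr
      _ = _ := by ring
  have hsecond : timeCoeff o a p * L * (ζ p ^ 2 * pdxx k k w p) ≤
      δ ^ 2 / 4 * (ζ p ^ 2 * pdxx k k w p ^ 2) + δ⁻¹ ^ 4 * M ^ 2 * L ^ 2 := by
    have hyoung := two_mul_le_add_mul_sq (a := ζ p * pdxx k k w p)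
      (b := timeCoeff o a p * (L * ζ p)) (ε := δ ^ 2 / 2) (by positivity)
    have hinv : (δ ^ 2 / 2)⁻¹ = 2 * δ⁻¹ ^ 2 := by field_simp
    have hsq : (timeCoeff o a p * (L * ζ p)) ^ 2 ≤ δ⁻¹ ^ 2 * (L ^ 2 * M ^ 2) := by
      rw [mul_pow, mul_pow]
      have hζp := hζ.sq_le hp
      gcongr
    have hsq' := mul_le_mul_of_nonneg_left hsq (by positivity : 0 ≤ δ⁻¹ ^ 2)
    rw [hinv] at hyoung
    linarith
  have hgrad : δ ^ 2 / 4 * (ζ p ^ 2 * pdxx k k w p ^ 2) ≤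
      δ ^ 2 / 4 * (ζ p ^ 2 * gradSq (pdx k w) p) := by
    gcongr
    exact pdx_sq_le_gradSq k (pdx k w) p
  have hrest : 0 ≤ δ⁻¹ ^ 4 * M ^ 2 * W ^ 2 := by positivity
  linarith

lemma exists_integral_gradSq_pdx_le (o : Fin d) (hδ : 0 < δ) (hρ : 0 ≤ ρ) (hρR : ρ < R) :
    ∃ N : ℝ, 0 ≤ N ∧ ∀ a, IsUniformlyElliptic δ a → ∀ w : ℝ × (Fin d → ℝ) → ℝ, ContDiff ℝ ∞ w →
      ∀ k, k ≠ o → ∫ p in Qc d ρ, gradSq (pdx k w) p ≤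
        N * ∫ p in Qc d R, (pdx k w p ^ 2 + parabolicOp o a w p ^ 2) := by
  obtain ⟨ζ, M, hζ⟩ := exists_isCutoff d hρ hρR
  have hR : 0 ≤ R := hρ.trans hρR.le
  have hζs := hζ.contDiff
  have hζc := hζs.continuous
  have hM := hζ.one_le
  refine ⟨2 * δ⁻¹ ^ 2 * ((δ⁻¹ * M ^ 2 + 4 * d ^ 4 * δ⁻¹ ^ 6 * M ^ 2) +
      (δ⁻¹ * M ^ 2 + δ⁻¹ ^ 4 * M ^ 2)), by positivity,
    fun a ha w hw k hk => integral_gradSq_le_of_source_le (o := o) ha hρ hρR.le hζ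
      (contDiff_pdx hw k) (ha.continuous_parabolicOp o hw) ?_⟩
  rw [integral_tangential_source_eq ha hR hζ hw hk]
  exact integral_Qc_mono hR (by fun_prop) (by fun_prop) fun p hp =>
    tangential_source_le ha hζ k hp

end Caccioppoli

/-! ### Interior estimates for first and second derivatives -/

/-- The sum of the squares of all second spatial derivatives except `∂_o²`. -/
noncomputable def mixedHessianSq {d : ℕ} (o : Fin d) (w : ℝ × (Fin d → ℝ) → ℝ) :
    ℝ × (Fin d → ℝ) → ℝ :=
  fun p => ∑ q ∈ Finset.univ.erase (o, o), pdxx q.1 q.2 w p ^ 2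

/-- The differential expression `D w` is bounded, in `L²` of a smaller cylinder, by `w` and `L₀ w`
in `L²` of a larger one, uniformly in the operators `L₀` with ellipticity constant `δ`. -/
def HasInteriorBound {d : ℕ} (o : Fin d) (δ : ℝ)
    (D : (ℝ × (Fin d → ℝ) → ℝ) → ℝ × (Fin d → ℝ) → ℝ) : Prop :=
  ∀ ρ R : ℝ, 0 ≤ ρ → ρ < R → ∃ N : ℝ, 0 ≤ N ∧ ∀ a, IsUniformlyElliptic δ a →
    ∀ w : ℝ × (Fin d → ℝ) → ℝ, ContDiff ℝ ∞ w →
      ∫ p in Qc d ρ, D w p ^ 2 ≤ N * ∫ p in Qc d R, (w p ^ 2 + parabolicOp o a w p ^ 2)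

section InteriorEstimates

variable {d : ℕ} {o : Fin d} {δ : ℝ} {a : ℝ → Fin d → Fin d → ℝ} {ρ R M : ℝ}
  {ζ w : ℝ × (Fin d → ℝ) → ℝ}

@[fun_prop] lemma continuous_mixedHessianSq (hw : ContDiff ℝ ∞ w) :
    Continuous (mixedHessianSq o w) := by
  unfold mixedHessianSq
  fun_prop

lemma mixedHessianSq_nonneg (o : Fin d) (w : ℝ × (Fin d → ℝ) → ℝ) (p : ℝ × (Fin d → ℝ)) :
    0 ≤ mixedHessianSq o w p :=
  Finset.sum_nonneg fun _ _ => sq_nonneg _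

lemma sq_timeCoeff_mul_pdt_add_normal_le (ha : IsUniformlyElliptic δ a)
    (w : ℝ × (Fin d → ℝ) → ℝ) (p : ℝ × (Fin d → ℝ)) :
    (timeCoeff o a p * pdt w p + pdxx o o w p) ^ 2 ≤
      (2 * δ⁻¹ ^ 2 + 2 * d ^ 2 * δ⁻¹ ^ 4) * (parabolicOp o a w p ^ 2 + mixedHessianSq o w p) := by
  have hδ := ha.pos
  set S := ∑ q ∈ Finset.univ.erase (o, o), spaceCoeff o a q.1 q.2 p * pdxx q.1 q.2 w p with hS
  have heq : timeCoeff o a p * pdt w p + pdxx o o w p =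
      timeCoeff o a p * parabolicOp o a w p - S := by
    rw [timeCoeff_mul_parabolicOp, ← Fintype.sum_prod_type', hS,
      ← Finset.add_sum_erase _ _ (Finset.mem_univ (o, o)), ha.spaceCoeff_self]
    ring
  have hSsq : S ^ 2 ≤ d ^ 2 * δ⁻¹ ^ 4 * mixedHessianSq o w p := by
    have hcard : ((Finset.univ.erase (o, o)).card : ℝ) ≤ d ^ 2 := by
      have := Finset.card_erase_le (s := Finset.univ) (a := (o, o))
      simp only [Finset.card_univ, Fintype.card_prod, Fintype.card_fin] at this
      rw [sq]
      exact_mod_cast this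
    calc S ^ 2 ≤ (Finset.univ.erase (o, o)).card * (δ⁻¹ ^ 2) ^ 2 * mixedHessianSq o w p :=
          sq_sum_mul_le_card_mul _ _ fun q _ => ha.abs_spaceCoeff_le o q.1 q.2 p
      _ ≤ d ^ 2 * (δ⁻¹ ^ 2) ^ 2 * mixedHessianSq o w p := by
          have := mixedHessianSq_nonneg o w p
          gcongr
      _ = _ := by ring
  have hL : (timeCoeff o a p * parabolicOp o a w p) ^ 2 ≤ δ⁻¹ ^ 2 * parabolicOp o a w p ^ 2 := by
    rw [mul_pow]
    have hc := ha.timeCoeff_le o p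
    have hc0 := (ha.timeCoeff_pos o p).le
    gcongr
  have hLpos : 0 ≤ 2 * d ^ 2 * δ⁻¹ ^ 4 * parabolicOp o a w p ^ 2 := by positivity
  have hHpos : 0 ≤ 2 * δ⁻¹ ^ 2 * mixedHessianSq o w p :=
    mul_nonneg (by positivity) (mixedHessianSq_nonneg o w p)
  rw [heq]
  nlinarith [sq_nonneg (timeCoeff o a p * parabolicOp o a w p + S)]

lemma IsCutoff.space_cross_term_le (hζ : IsCutoff ρ R M ζ) (hδ : 0 < δ)
    {p : ℝ × (Fin d → ℝ)} (hp : p ∈ Qc d R) :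
    4 * (ζ p * pdx o ζ p * (pdt w p * pdx o w p)) ≤
      δ / 2 * (ζ p ^ 2 * pdt w p ^ 2) + 8 * δ⁻¹ * M ^ 2 * pdx o w p ^ 2 := by
  have hyoung := two_mul_le_add_mul_sq (a := ζ p * pdt w p) (b := 2 * (pdx o ζ p * pdx o w p))
    (half_pos hδ)
  have hdζ : 8 * δ⁻¹ * pdx o ζ p ^ 2 * pdx o w p ^ 2 ≤ 8 * δ⁻¹ * M ^ 2 * pdx o w p ^ 2 := by
    have := sq_le_sq.2 ((hζ.abs_pdx_le p hp o).trans (le_abs_self M))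
    gcongr ?_ * ?_ * _
  rw [inv_div, div_eq_mul_inv 2] at hyoung
  linarith

lemma IsCutoff.neg_time_cross_term_le (hζ : IsCutoff ρ R M ζ)
    {p : ℝ × (Fin d → ℝ)} (hp : p ∈ Qc d R) :
    -(2 * (ζ p * pdt ζ p * pdx o w p ^ 2)) ≤ 2 * M ^ 2 * pdx o w p ^ 2 := by
  have hcoeff : |ζ p * pdt ζ p| ≤ M * M := by
    rw [abs_mul]
    exact mul_le_mul (hζ.abs_le p hp) (hζ.abs_pdt_le p hp) (abs_nonneg _)
      (by linarith [hζ.one_le])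
  have := mul_le_mul_of_nonneg_right ((neg_le_abs _).trans hcoeff) (sq_nonneg (pdx o w p))
  linarith

/- Since `a^{oo} (w_t / a^{oo} + w_oo)²` has the cross term `2 w_t w_oo`, which is an exact
derivative up to lower order, the squares `w_t²` and `w_oo²` can be controlled simultaneously. -/
lemma cutoff_sq_mul_pdt_sq_add_normal_sq_le (ha : IsUniformlyElliptic δ a) (hζ : IsCutoff ρ R M ζ)
    {p : ℝ × (Fin d → ℝ)} (hp : p ∈ Qc d R) :
    δ / 2 * (ζ p ^ 2 * (pdt w p ^ 2 + pdxx o o w p ^ 2)) ≤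
      (δ⁻¹ * M ^ 2 * (2 * δ⁻¹ ^ 2 + 2 * d ^ 2 * δ⁻¹ ^ 4) + (8 * δ⁻¹ + 2) * M ^ 2) *
          (parabolicOp o a w p ^ 2 + pdx o w p ^ 2 + mixedHessianSq o w p)
        - 4 * (ζ p * pdx o ζ p * (pdt w p * pdx o w p))
        - 2 * (ζ p ^ 2 * (pdt w p * pdxx o o w p))
        + 2 * (ζ p * pdt ζ p * pdx o w p ^ 2) := by
  have hδ := ha.pos
  have hM := hζ.one_le
  have hH := mixedHessianSq_nonneg o w p
  set c := timeCoeff o a p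
  have hc : 0 < c := ha.timeCoeff_pos o p
  have hcge : δ ≤ c := ha.le_timeCoeff o p
  have hinv_ge : δ ≤ c⁻¹ := (le_inv_comm₀ hδ hc).2 (ha.timeCoeff_le o p)
  have hinv_le : c⁻¹ ≤ δ⁻¹ := inv_anti₀ hδ hcge
  set K := 2 * δ⁻¹ ^ 2 + 2 * d ^ 2 * δ⁻¹ ^ 4
  have hζp := hζ.sq_le hp
  have hsquare : c⁻¹ * ζ p ^ 2 * (c * pdt w p + pdxx o o w p) ^ 2 ≤
      δ⁻¹ * M ^ 2 * (K * (parabolicOp o a w p ^ 2 + mixedHessianSq o w p)) := by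
    have := sq_timeCoeff_mul_pdt_add_normal_le (o := o) ha w p
    gcongr
  have hexpand : c⁻¹ * ζ p ^ 2 * (c * pdt w p + pdxx o o w p) ^ 2 =
      ζ p ^ 2 * (c * pdt w p ^ 2 + 2 * (pdt w p * pdxx o o w p) + c⁻¹ * pdxx o o w p ^ 2) := by
    field_simp
    ring
  have hcoercive : δ * (ζ p ^ 2 * (pdt w p ^ 2 + pdxx o o w p ^ 2)) ≤
      ζ p ^ 2 * (c * pdt w p ^ 2 + c⁻¹ * pdxx o o w p ^ 2) := by
    rw [mul_left_comm, mul_add]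
    gcongr
  have hspace := hζ.space_cross_term_le (o := o) (w := w) hδ hp
  have htime := hζ.neg_time_cross_term_le (o := o) (w := w) hp
  have hdrop : 0 ≤ δ / 2 * (ζ p ^ 2 * pdxx o o w p ^ 2) +
      δ⁻¹ * M ^ 2 * K * pdx o w p ^ 2 +
        (8 * δ⁻¹ + 2) * M ^ 2 * (parabolicOp o a w p ^ 2 + mixedHessianSq o w p) := by positivity
  linarith

lemma integral_cutoff_cross_term_nonneg (hR : 0 ≤ R) (hζ : IsCutoff ρ R M ζ)
    (hw : ContDiff ℝ ∞ w) :
    0 ≤ ∫ p in Qc d R, (4 * (ζ p * pdx o ζ p * (pdt w p * pdx o w p))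
      + 2 * (ζ p ^ 2 * (pdt w p * pdxx o o w p)) - 2 * (ζ p * pdt ζ p * pdx o w p ^ 2)) := by
  have hζs := hζ.contDiff
  have hζd := hζs.differentiable (by simp)
  have hx := integral_Qc_pdx_eq_zero (R := R)
    (F := fun p => (ζ p * ζ p) * (pdt w p * pdx o w p)) (by fun_prop) o hR
    fun p hp => by simp [hζ.eq_zero p hp]
  have ht := integral_Qc_pdt_nonpos (R := R)
    (F := fun p => (ζ p * pdx o w p) * (ζ p * pdx o w p)) (by fun_prop) hR
    (fun p hp => by simp [hζ.eq_zero p hp]) fun p => mul_self_nonneg _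
  have hsub := integral_Qc_sub hR
    (f := fun p => 2 * pdx o (fun p => (ζ p * ζ p) * (pdt w p * pdx o w p)) p)
    (g := pdt fun p => (ζ p * pdx o w p) * (ζ p * pdx o w p)) (by fun_prop) (by fun_prop)
  rw [integral_const_mul, hx] at hsub
  have hnonneg : 0 ≤ ∫ p in Qc d R, (2 * pdx o (fun p => (ζ p * ζ p) * (pdt w p * pdx o w p)) p -
      pdt (fun p => (ζ p * pdx o w p) * (ζ p * pdx o w p)) p) := by linarith
  simp (disch := fun_prop) only [pdx_mul, pdt_mul, pdx_pdt_comm hw] at hnonneg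
  refine hnonneg.trans_eq (congrArg _ (funext fun p => ?_))
  simp only [pdxx]
  ring

lemma exists_integral_pdt_sq_add_normal_sq_le (o : Fin d) (hδ : 0 < δ) (hρ : 0 ≤ ρ) (hρR : ρ < R) :
    ∃ N : ℝ, 0 ≤ N ∧ ∀ a, IsUniformlyElliptic δ a → ∀ w : ℝ × (Fin d → ℝ) → ℝ, ContDiff ℝ ∞ w →
      ∫ p in Qc d ρ, (pdt w p ^ 2 + pdxx o o w p ^ 2) ≤
        N * ∫ p in Qc d R, (parabolicOp o a w p ^ 2 + pdx o w p ^ 2 + mixedHessianSq o w p) := by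
  obtain ⟨ζ, M, hζ⟩ := exists_isCutoff d hρ hρR
  have hR := hρ.trans hρR.le
  have hM := hζ.one_le
  have hζs := hζ.contDiff
  have hζc := hζs.continuous
  set K := δ⁻¹ * M ^ 2 * (2 * δ⁻¹ ^ 2 + 2 * d ^ 2 * δ⁻¹ ^ 4) + (8 * δ⁻¹ + 2) * M ^ 2
  refine ⟨2 * δ⁻¹ * K, by positivity, fun a ha w hw => ?_⟩
  refine (hζ.integral_le hρ hρR.le (by fun_prop) fun p => by positivity).trans ?_
  have hcross := integral_cutoff_cross_term_nonneg (o := o) hR hζ hw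
  have hmono := integral_Qc_mono hR
    (f := fun p => δ / 2 * (ζ p ^ 2 * (pdt w p ^ 2 + pdxx o o w p ^ 2))
      + (4 * (ζ p * pdx o ζ p * (pdt w p * pdx o w p))
        + 2 * (ζ p ^ 2 * (pdt w p * pdxx o o w p)) - 2 * (ζ p * pdt ζ p * pdx o w p ^ 2)))
    (g := fun p => K * (parabolicOp o a w p ^ 2 + pdx o w p ^ 2 + mixedHessianSq o w p))
    (by fun_prop) (by fun_prop) fun p hp => by
      linarith [cutoff_sq_mul_pdt_sq_add_normal_sq_le (o := o) (w := w) ha hζ hp]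
  rw [integral_Qc_add hR (by fun_prop) (by fun_prop)] at hmono
  simp only [integral_const_mul] at hmono
  have habsorb := (le_add_of_nonneg_right hcross).trans hmono
  rw [mul_assoc, mul_assoc, ← div_le_iff₀' two_pos, ← div_le_iff₀' (inv_pos.2 hδ)]
  field_simp at habsorb ⊢
  linarith

lemma hasInteriorBound_pdx (hδ : 0 < δ) (j : Fin d) : HasInteriorBound o δ (pdx j) := by
  intro ρ R hρ hρR
  obtain ⟨N, hN, hgrad⟩ := exists_integral_gradSq_le o hδ hρ hρR
  refine ⟨N, hN, fun a ha w hw => le_trans ?_ (hgrad a ha w hw)⟩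
  exact integral_Qc_mono hρ (by fun_prop) (by fun_prop) fun p _ => pdx_sq_le_gradSq j w p

lemma integral_Qc_parabolicOp_sq_le (ha : IsUniformlyElliptic δ a) (hw : ContDiff ℝ ∞ w)
    (hρ : 0 ≤ ρ) (hρR : ρ ≤ R) :
    ∫ p in Qc d ρ, parabolicOp o a w p ^ 2 ≤
      ∫ p in Qc d R, (w p ^ 2 + parabolicOp o a w p ^ 2) := by
  have hwc := hw.continuous
  refine (integral_Qc_mono_radius hρ hρR (by fun_prop) fun p => sq_nonneg _).trans ?_
  exact integral_Qc_mono (hρ.trans hρR) (by fun_prop) (by fun_prop) fun p _ =>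
    le_add_of_nonneg_left (sq_nonneg (w p))

lemma hasInteriorBound_pdx_pdx_of_ne (hδ : 0 < δ) (j : Fin d) {k : Fin d} (hk : k ≠ o) :
    HasInteriorBound o δ fun w => pdx j (pdx k w) := by
  intro ρ R hρ hρR
  obtain ⟨r, hρr, hrR⟩ := exists_between hρR
  have hr := hρ.trans hρr.le
  obtain ⟨N₁, hN₁, hgrad⟩ := exists_integral_gradSq_pdx_le o hδ hρ hρr
  obtain ⟨N₂, hN₂, hpdx⟩ := hasInteriorBound_pdx (o := o) hδ k r R hr hrR
  refine ⟨N₁ * (N₂ + 1), by positivity, fun a ha w hw => ?_⟩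
  calc ∫ p in Qc d ρ, pdx j (pdx k w) p ^ 2 ≤ ∫ p in Qc d ρ, gradSq (pdx k w) p :=
        integral_Qc_mono hρ (by fun_prop) (by fun_prop) fun p _ => pdx_sq_le_gradSq j _ p
    _ ≤ N₁ * ∫ p in Qc d r, (pdx k w p ^ 2 + parabolicOp o a w p ^ 2) := hgrad a ha w hw k hk
    _ = N₁ * ((∫ p in Qc d r, pdx k w p ^ 2) + ∫ p in Qc d r, parabolicOp o a w p ^ 2) := by
        rw [integral_Qc_add hr (by fun_prop) (by fun_prop)]
    _ ≤ N₁ * (N₂ * (∫ p in Qc d R, (w p ^ 2 + parabolicOp o a w p ^ 2)) +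
          ∫ p in Qc d R, (w p ^ 2 + parabolicOp o a w p ^ 2)) := by
        gcongr
        · exact hpdx a ha w hw
        · exact integral_Qc_parabolicOp_sq_le ha hw hr hrR.le
    _ = _ := by ring

lemma hasInteriorBound_pdxx_of_ne (hδ : 0 < δ) {q : Fin d × Fin d} (hq : q ≠ (o, o)) :
    HasInteriorBound o δ (pdxx q.1 q.2) := by
  by_cases h2 : q.2 = o
  · have h1 : q.1 ≠ o := fun h1 => hq (Prod.ext h1 h2)
    intro ρ R hρ hρR
    obtain ⟨N, hN, hbound⟩ := hasInteriorBound_pdx_pdx_of_ne hδ q.2 h1 ρ R hρ hρR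
    refine ⟨N, hN, fun a ha w hw => ?_⟩
    simpa only [pdxx, pdx_pdx_comm hw q.1 q.2] using hbound a ha w hw
  · exact hasInteriorBound_pdx_pdx_of_ne hδ q.1 h2

lemma exists_integral_mixedHessianSq_le (o : Fin d) (hδ : 0 < δ) (hρ : 0 ≤ ρ) (hρR : ρ < R) :
    ∃ N : ℝ, 0 ≤ N ∧ ∀ a, IsUniformlyElliptic δ a → ∀ w : ℝ × (Fin d → ℝ) → ℝ, ContDiff ℝ ∞ w →
      ∫ p in Qc d ρ, mixedHessianSq o w p ≤
        N * ∫ p in Qc d R, (w p ^ 2 + parabolicOp o a w p ^ 2) := by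
  choose! N hN hbound using fun (q : Fin d × Fin d) (hq : q ≠ (o, o)) =>
    hasInteriorBound_pdxx_of_ne hδ hq ρ R hρ hρR
  have hne {q : Fin d × Fin d} (hq : q ∈ Finset.univ.erase (o, o)) : q ≠ (o, o) :=
    Finset.ne_of_mem_erase hq
  refine ⟨∑ q ∈ Finset.univ.erase (o, o), N q, Finset.sum_nonneg fun q hq => hN q (hne hq),
    fun a ha w hw => ?_⟩
  simp only [mixedHessianSq]
  rw [integral_Qc_sum _ hρ fun q => by fun_prop, Finset.sum_mul]
  exact Finset.sum_le_sum fun q hq => hbound q (hne hq) a ha w hw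

lemma exists_integral_pdt_sq_add_normal_sq_le_interior (o : Fin d) (hδ : 0 < δ) (hρ : 0 ≤ ρ)
    (hρR : ρ < R) :
    ∃ N : ℝ, 0 ≤ N ∧ ∀ a, IsUniformlyElliptic δ a → ∀ w : ℝ × (Fin d → ℝ) → ℝ, ContDiff ℝ ∞ w →
      ∫ p in Qc d ρ, (pdt w p ^ 2 + pdxx o o w p ^ 2) ≤
        N * ∫ p in Qc d R, (w p ^ 2 + parabolicOp o a w p ^ 2) := by
  obtain ⟨r, hρr, hrR⟩ := exists_between hρR
  have hr := hρ.trans hρr.le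
  obtain ⟨N₁, hN₁, hnormal⟩ := exists_integral_pdt_sq_add_normal_sq_le o hδ hρ hρr
  obtain ⟨N₂, hN₂, hpdx⟩ := hasInteriorBound_pdx (o := o) hδ o r R hr hrR
  obtain ⟨N₃, hN₃, hmixed⟩ := exists_integral_mixedHessianSq_le o hδ hr hrR
  refine ⟨N₁ * (1 + N₂ + N₃), by positivity, fun a ha w hw => ?_⟩
  refine (hnormal a ha w hw).trans ?_
  rw [mul_assoc, integral_Qc_add hr (by fun_prop) (by fun_prop),
    integral_Qc_add hr (by fun_prop) (by fun_prop), add_mul, add_mul, one_mul]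
  gcongr
  · exact integral_Qc_parabolicOp_sq_le ha hw hr hrR.le
  · exact hpdx a ha w hw
  · exact hmixed a ha w hw

lemma hasInteriorBound_pdt (hδ : 0 < δ) : HasInteriorBound o δ pdt := by
  intro ρ R hρ hρR
  obtain ⟨N, hN, hbound⟩ := exists_integral_pdt_sq_add_normal_sq_le_interior o hδ hρ hρR
  refine ⟨N, hN, fun a ha w hw => le_trans ?_ (hbound a ha w hw)⟩
  exact integral_Qc_mono hρ (by fun_prop) (by fun_prop) fun p _ =>
    le_add_of_nonneg_right (sq_nonneg _)

lemma hasInteriorBound_pdxx (hδ : 0 < δ) (j k : Fin d) : HasInteriorBound o δ (pdxx j k) := by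
  by_cases hjk : (j, k) = (o, o)
  · obtain ⟨rfl, rfl⟩ := Prod.mk.inj hjk
    intro ρ R hρ hρR
    obtain ⟨N, hN, hbound⟩ := exists_integral_pdt_sq_add_normal_sq_le_interior k hδ hρ hρR
    refine ⟨N, hN, fun a ha w hw => le_trans ?_ (hbound a ha w hw)⟩
    exact integral_Qc_mono hρ (by fun_prop) (by fun_prop) fun p _ =>
      le_add_of_nonneg_left (sq_nonneg _)
  · exact hasInteriorBound_pdxx_of_ne hδ hjk

end InteriorEstimates

/-! ### A Sobolev inequality -/

section Sobolev

lemma sq_le_sq_add_integral {f f' : ℝ → ℝ} (hf : ∀ s, HasDerivAt f (f' s) s)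
    (hf' : Continuous f') {x y : ℝ} (hxy : x ≤ y) :
    f x ^ 2 ≤ f y ^ 2 + ∫ s in x..y, (f s ^ 2 + f' s ^ 2) := by
  have hfc : Continuous f := continuous_iff_continuousAt.2 fun s => (hf s).continuousAt
  have hftc : ∫ s in x..y, 2 * f s * f' s = f y ^ 2 - f x ^ 2 :=
    intervalIntegral.integral_eq_sub_of_hasDerivAt (f := fun s => f s ^ 2)
      (fun s _ => ((hf s).fun_pow 2).congr_deriv (by norm_num))
      (Continuous.intervalIntegrable (by fun_prop) _ _)
  have hmono : ∫ s in x..y, -(2 * f s * f' s) ≤ ∫ s in x..y, (f s ^ 2 + f' s ^ 2) :=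
    intervalIntegral.integral_mono_on hxy (Continuous.intervalIntegrable (by fun_prop) _ _)
      (Continuous.intervalIntegrable (by fun_prop) _ _)
      fun s _ => by nlinarith [sq_nonneg (f s + f' s)]
  rw [intervalIntegral.integral_neg] at hmono
  linarith

lemma sq_le_mul_integral {f f' : ℝ → ℝ} (hf : ∀ s, HasDerivAt f (f' s) s) (hf' : Continuous f')
    (x : ℝ) {ε : ℝ} (hε : 0 < ε) :
    f x ^ 2 ≤ (ε⁻¹ + 1) * ∫ s in x..x + ε, (f s ^ 2 + f' s ^ 2) := by
  have hfc : Continuous f := continuous_iff_continuousAt.2 fun s => (hf s).continuousAt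
  have hle : x ≤ x + ε := by linarith
  set I := ∫ s in x..x + ε, (f s ^ 2 + f' s ^ 2)
  have hpoint (y : ℝ) (hy : y ∈ Set.Icc x (x + ε)) : f x ^ 2 ≤ f y ^ 2 + I := by
    refine (sq_le_sq_add_integral hf hf' hy.1).trans ?_
    gcongr
    exact intervalIntegral.integral_mono_interval le_rfl hy.1 hy.2
      (ae_of_all _ fun s => add_nonneg (sq_nonneg (f s)) (sq_nonneg (f' s)))
      (Continuous.intervalIntegrable (by fun_prop) _ _)
  have hmean : ∫ _ in x..x + ε, f x ^ 2 ≤ ∫ y in x..x + ε, (f y ^ 2 + I) :=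
    intervalIntegral.integral_mono_on hle (Continuous.intervalIntegrable (by fun_prop) _ _)
      (Continuous.intervalIntegrable (by fun_prop) _ _) hpoint
  have hsq : ∫ y in x..x + ε, f y ^ 2 ≤ I :=
    intervalIntegral.integral_mono_on hle (Continuous.intervalIntegrable (by fun_prop) _ _)
      (Continuous.intervalIntegrable (by fun_prop) _ _)
      fun s _ => le_add_of_nonneg_right (sq_nonneg _)
  rw [intervalIntegral.integral_add (Continuous.intervalIntegrable (by fun_prop) _ _)
    (Continuous.intervalIntegrable (by fun_prop) _ _), intervalIntegral.integral_const,
    intervalIntegral.integral_const, add_sub_cancel_left, smul_eq_mul, smul_eq_mul] at hmean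
  rw [← mul_le_mul_iff_right₀ hε]
  field_simp
  linarith

lemma ofReal_sq_le_mul_lintegral {f f' : ℝ → ℝ} (hf : ∀ s, HasDerivAt f (f' s) s)
    (hf' : Continuous f') (x : ℝ) {ε : ℝ} (hε : 0 < ε) :
    ENNReal.ofReal (f x ^ 2) ≤ ENNReal.ofReal (ε⁻¹ + 1) *
      ∫⁻ s in Set.Ioc x (x + ε), (ENNReal.ofReal (f s ^ 2) + ENNReal.ofReal (f' s ^ 2)) := by
  have hfc : Continuous f := continuous_iff_continuousAt.2 fun s => (hf s).continuousAt
  have hle : x ≤ x + ε := by linarith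
  have hintegrable : IntervalIntegrable (fun s => f s ^ 2 + f' s ^ 2) volume x (x + ε) :=
    Continuous.intervalIntegrable (by fun_prop) _ _
  simp only [← ENNReal.ofReal_add (sq_nonneg _) (sq_nonneg _)]
  rw [← ofReal_integral_eq_lintegral_ofReal
      ((intervalIntegrable_iff_integrableOn_Ioc_of_le hle).1 hintegrable)
      (ae_of_all _ fun s => add_nonneg (sq_nonneg (f s)) (sq_nonneg (f' s))),
    ← ENNReal.ofReal_mul (by positivity), ← intervalIntegral.integral_of_le hle]
  exact ENNReal.ofReal_le_ofReal (sq_le_mul_integral hf hf' x hε)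

variable {d : ℕ}

/-- The sum of the squares of the derivatives of `f` along all sublists of a list of spatial
directions. -/
noncomputable def derivSumSq : List (Fin d) → (ℝ × (Fin d → ℝ) → ℝ) → ℝ × (Fin d → ℝ) → ℝ
  | [], f => fun p => f p ^ 2
  | i :: l, f => fun p => derivSumSq l f p + derivSumSq l (pdx i f) p

lemma derivSumSq_nonneg (l : List (Fin d)) (f : ℝ × (Fin d → ℝ) → ℝ) (p : ℝ × (Fin d → ℝ)) :
    0 ≤ derivSumSq l f p := by
  induction l generalizing f with
  | nil => exact sq_nonneg _
  | cons i l ih => exact add_nonneg (ih _) (ih _)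

@[fun_prop] lemma continuous_derivSumSq (l : List (Fin d)) {f : ℝ × (Fin d → ℝ) → ℝ}
    (hf : ContDiff ℝ ∞ f) : Continuous (derivSumSq l f) := by
  induction l generalizing f with
  | nil => exact hf.continuous.pow 2
  | cons i l ih => exact (ih hf).add (ih (contDiff_pdx hf i))

lemma measurable_ofReal_derivSumSq (l : List (Fin d)) {f : ℝ × (Fin d → ℝ) → ℝ}
    (hf : ContDiff ℝ ∞ f) (t : ℝ) :
    Measurable fun y => ENNReal.ofReal (derivSumSq l f (t, y)) :=
  ((continuous_derivSumSq l hf).comp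
    (by fun_prop : Continuous fun y => (t, y))).measurable.ennreal_ofReal

lemma lmarginal_derivSumSq_cons (μ : Fin d → Measure ℝ) (s : Finset (Fin d)) (i : Fin d)
    (l : List (Fin d)) {f : ℝ × (Fin d → ℝ) → ℝ} (hf : ContDiff ℝ ∞ f) (t : ℝ) (x : Fin d → ℝ) :
    lmarginal μ s (fun y => ENNReal.ofReal (derivSumSq (i :: l) f (t, y))) x =
      lmarginal μ s (fun y => ENNReal.ofReal (derivSumSq l f (t, y))) x +
        lmarginal μ s (fun y => ENNReal.ofReal (derivSumSq l (pdx i f) (t, y))) x := by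
  simp only [derivSumSq, ENNReal.ofReal_add (derivSumSq_nonneg _ _ _) (derivSumSq_nonneg _ _ _)]
  exact lintegral_add_left ((measurable_ofReal_derivSumSq l hf t).comp measurable_updateFinset) _

lemma ofReal_sq_le_lmarginal_derivSumSq (z : Fin d → ℝ) {ε : ℝ} (hε : 0 < ε) (t : ℝ)
    {l : List (Fin d)} (hl : l.Nodup) {f : ℝ × (Fin d → ℝ) → ℝ} (hf : ContDiff ℝ ∞ f)
    {x : Fin d → ℝ} (hx : ∀ i ∈ l, x i = z i) :
    ENNReal.ofReal (f (t, x) ^ 2) ≤ ENNReal.ofReal (ε⁻¹ + 1) ^ l.length *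
      lmarginal (fun i => (volume : Measure ℝ).restrict (Set.Ioc (z i) (z i + ε))) l.toFinset
        (fun y => ENNReal.ofReal (derivSumSq l f (t, y))) x := by
  induction l generalizing f x with
  | nil => simp [derivSumSq]
  | cons i l ih =>
    rw [List.nodup_cons] at hl
    have hstep := ofReal_sq_le_mul_lintegral
      (fun s => hasDerivAt_update_pdx (hf.differentiable (by simp)) t x i s)
      (by fun_prop) (z i) hε
    rw [← hx i (by simp), Function.update_eq_self, hx i (by simp)] at hstep
    rw [List.toFinset_cons, lmarginal_insert _ (measurable_ofReal_derivSumSq (i :: l) hf t)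
      (by simpa using hl.1)]
    refine hstep.trans ?_
    rw [List.length_cons, pow_succ', mul_assoc]
    gcongr
    rw [← lintegral_const_mul' _ _ (by simp)]
    refine lintegral_mono fun s => ?_
    have hx' (j : Fin d) (hj : j ∈ l) : Function.update x i s j = z j := by
      rw [Function.update_of_ne (ne_of_mem_of_not_mem hj hl.1)]
      exact hx j (by simp [hj])
    rw [lmarginal_derivSumSq_cons _ _ _ _ hf, mul_add]
    exact add_le_add (ih hl.2 hf hx') (ih hl.2 (contDiff_pdx hf i) hx')

lemma box_subset_Qc_half {t : ℝ} {x : Fin d → ℝ} (hp : (t, x) ∈ Qc d (1 / 4)) {ε : ℝ} (hε : 0 < ε)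
    (hεd : ε * (d + 1) ≤ 1 / 8) :
    Set.Ioc t (t + ε) ×ˢ (Set.univ.pi fun i => Set.Ioc (x i) (x i + ε)) ⊆ Qc d (1 / 2) := by
  rintro ⟨s, y⟩ ⟨⟨hts, hst⟩, hy⟩
  obtain ⟨⟨ht0, ht⟩, hx : ∑ j, x j ^ 2 < (1 / 4) ^ 2⟩ := hp
  dsimp only at ht0 ht hts hst hy
  have hdε : 0 ≤ d * ε := by positivity
  refine ⟨⟨by dsimp only; linarith, by dsimp only; linarith⟩, ?_⟩
  have hsq (j : Fin d) : y j ^ 2 ≤ 2 * x j ^ 2 + 2 * ε ^ 2 := by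
    obtain ⟨hxy, hyx⟩ := hy j (Set.mem_univ j)
    have hdiff : (y j - x j) ^ 2 ≤ ε ^ 2 := pow_le_pow_left₀ (by linarith) (by linarith) 2
    nlinarith [sq_nonneg (2 * x j - y j)]
  have hsum := Finset.sum_le_sum fun j (_ : j ∈ Finset.univ) => hsq j
  rw [Finset.sum_add_distrib, ← Finset.mul_sum, Finset.sum_const, Finset.card_univ,
    Fintype.card_fin, nsmul_eq_mul] at hsum
  have hsmall : (d * ε) * ε ≤ (1 / 8) * (1 / 8) :=
    mul_le_mul (by linarith) (by linarith) hε.le (by norm_num)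
  change ∑ j, y j ^ 2 < (1 / 2) ^ 2
  linarith

lemma ofReal_sq_le_lintegral_box {l : List (Fin d)} (hl : l.Nodup)
    (huniv : l.toFinset = Finset.univ) {W : ℝ × (Fin d → ℝ) → ℝ} (hW : ContDiff ℝ ∞ W)
    (t : ℝ) (x : Fin d → ℝ) {ε : ℝ} (hε : 0 < ε) :
    ENNReal.ofReal (W (t, x) ^ 2) ≤ ENNReal.ofReal (ε⁻¹ + 1) ^ (l.length + 1) *
      ∫⁻ q in Set.Ioc t (t + ε) ×ˢ Set.univ.pi fun i => Set.Ioc (x i) (x i + ε),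
        ENNReal.ofReal (derivSumSq l W q + derivSumSq l (pdt W) q) := by
  have hspace (s : ℝ) {f : ℝ × (Fin d → ℝ) → ℝ} (hf : ContDiff ℝ ∞ f) :
      ENNReal.ofReal (f (s, x) ^ 2) ≤ ENNReal.ofReal (ε⁻¹ + 1) ^ l.length *
        ∫⁻ y in Set.univ.pi fun i => Set.Ioc (x i) (x i + ε),
          ENNReal.ofReal (derivSumSq l f (s, y)) := by
    have := ofReal_sq_le_lmarginal_derivSumSq x hε s hl hf (x := x) fun _ _ => rfl
    rwa [huniv, lmarginal_univ, ← Measure.restrict_pi_pi, ← volume_pi] at this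
  have hmeas : Measurable fun q => ENNReal.ofReal (derivSumSq l W q + derivSumSq l (pdt W) q) :=
    ((continuous_derivSumSq l hW).add
      (continuous_derivSumSq l (contDiff_pdt hW))).measurable.ennreal_ofReal
  rw [Measure.volume_eq_prod, ← Measure.prod_restrict, lintegral_prod _ hmeas.aemeasurable]
  refine (ofReal_sq_le_mul_lintegral
    (fun s => hasDerivAt_pdt (hW.differentiable (by simp)) x s) (by fun_prop) t hε).trans ?_
  rw [pow_succ', mul_assoc]
  gcongr
  rw [← lintegral_const_mul' _ _ (by simp)]
  refine lintegral_mono fun s => (add_le_add (hspace s hW) (hspace s (contDiff_pdt hW))).trans_eq ?_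
  rw [← mul_add, ← lintegral_add_left (measurable_ofReal_derivSumSq l hW s)]
  simp only [ENNReal.ofReal_add (derivSumSq_nonneg _ _ _) (derivSumSq_nonneg _ _ _)]

lemma exists_sq_le_integral_derivSumSq {l : List (Fin d)} (hl : l.Nodup)
    (huniv : l.toFinset = Finset.univ) :
    ∃ K : ℝ, 0 ≤ K ∧ ∀ W : ℝ × (Fin d → ℝ) → ℝ, ContDiff ℝ ∞ W → ∀ p ∈ Qc d (1 / 4),
      W p ^ 2 ≤ K * ∫ q in Qc d (1 / 2), (derivSumSq l W q + derivSumSq l (pdt W) q) := by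
  set ε : ℝ := (8 * (d + 1))⁻¹ with hε_eq
  have hε : 0 < ε := by positivity
  have hεd : ε * (d + 1) ≤ 1 / 8 := by
    rw [hε_eq]
    field_simp
    rfl
  refine ⟨(ε⁻¹ + 1) ^ (l.length + 1), by positivity, ?_⟩
  rintro W hW ⟨t, x⟩ hp
  have hnonneg (q : ℝ × (Fin d → ℝ)) : 0 ≤ derivSumSq l W q + derivSumSq l (pdt W) q :=
    add_nonneg (derivSumSq_nonneg _ _ _) (derivSumSq_nonneg _ _ _)
  have hbox := (ofReal_sq_le_lintegral_box hl huniv hW t x hε).trans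
    (mul_le_mul_right (lintegral_mono_set (box_subset_Qc_half hp hε hεd)) _)
  rw [← ofReal_integral_eq_lintegral_ofReal (integrableOn_Qc (by norm_num) (by fun_prop))
    (ae_of_all _ hnonneg), ← ENNReal.ofReal_pow (by positivity),
    ← ENNReal.ofReal_mul (by positivity)] at hbox
  exact (ENNReal.ofReal_le_ofReal_iff
    (mul_nonneg (by positivity) (integral_nonneg hnonneg))).1 hbox

end Sobolev

/-! ### Pointwise estimates for solutions -/

/-- `W` is smooth on the whole space and solves `L₀ W = 0` in the unit cylinder. -/
structure IsSolution {d : ℕ} (o : Fin d) (a : ℝ → Fin d → Fin d → ℝ)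
    (W : ℝ × (Fin d → ℝ) → ℝ) : Prop where
  contDiff : ContDiff ℝ ∞ W
  parabolicOp_eq_zero : ∀ p ∈ Qc d 1, parabolicOp o a W p = 0

/-- An operator that maps solutions to solutions, for every admissible choice of coefficients. -/
def PreservesSolutions {d : ℕ} (o : Fin d) (δ : ℝ)
    (T : (ℝ × (Fin d → ℝ) → ℝ) → ℝ × (Fin d → ℝ) → ℝ) : Prop :=
  ∀ a, IsUniformlyElliptic δ a → ∀ W, IsSolution o a W → IsSolution o a (T W)

/-- The integral of `Φ W` over a smaller cylinder is bounded by that of `W²` over a larger one,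
uniformly over all solutions `W`. -/
structure IsControlled {d : ℕ} (o : Fin d) (δ : ℝ)
    (Φ : (ℝ × (Fin d → ℝ) → ℝ) → ℝ × (Fin d → ℝ) → ℝ) : Prop where
  continuous : ∀ W, ContDiff ℝ ∞ W → Continuous (Φ W)
  integral_le : ∀ ρ R : ℝ, 0 ≤ ρ → ρ < R → R ≤ 1 → ∃ N : ℝ, 0 ≤ N ∧
    ∀ a, IsUniformlyElliptic δ a → ∀ W, IsSolution o a W →
      ∫ p in Qc d ρ, Φ W p ≤ N * ∫ p in Qc d R, W p ^ 2

/-- The supremum of `(D W)²` over `Q_{1/4}` is bounded by the integral of `W²` over any cylinder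
larger than `Q_{1/2}`, uniformly over all solutions `W`. -/
def HasSupBound {d : ℕ} (o : Fin d) (δ : ℝ)
    (D : (ℝ × (Fin d → ℝ) → ℝ) → ℝ × (Fin d → ℝ) → ℝ) : Prop :=
  ∀ R : ℝ, 1 / 2 < R → R ≤ 1 → ∃ K : ℝ, 0 ≤ K ∧
    ∀ a, IsUniformlyElliptic δ a → ∀ W, IsSolution o a W → ∀ p ∈ Qc d (1 / 4),
      D W p ^ 2 ≤ K * ∫ q in Qc d R, W q ^ 2

section Solutions

variable {d : ℕ} {o : Fin d} {δ : ℝ}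
  {D T Φ Ψ : (ℝ × (Fin d → ℝ) → ℝ) → ℝ × (Fin d → ℝ) → ℝ}

lemma preservesSolutions_pdt : PreservesSolutions o δ pdt := fun a ha W hW => by
  refine ⟨contDiff_pdt hW.contDiff, fun p hp => ?_⟩
  rw [ha.parabolicOp_pdt o hW.contDiff]
  exact (eqOn_fderiv_apply (isOpen_Qc d 1) hW.parabolicOp_eq_zero (1, 0) hp).trans (by simp)

lemma preservesSolutions_pdx {k : Fin d} (hk : k ≠ o) : PreservesSolutions o δ (pdx k) :=
  fun a ha W hW => by
    refine ⟨contDiff_pdx hW.contDiff k, fun p hp => ?_⟩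
    rw [ha.parabolicOp_pdx hW.contDiff hk]
    exact (eqOn_fderiv_apply (isOpen_Qc d 1) hW.parabolicOp_eq_zero (0, Pi.single k 1) hp).trans
      (by simp)

lemma HasInteriorBound.exists_integral_le (hT : HasInteriorBound o δ T) {ρ R : ℝ} (hρ : 0 ≤ ρ)
    (hρR : ρ < R) (hR : R ≤ 1) :
    ∃ N : ℝ, 0 ≤ N ∧ ∀ a, IsUniformlyElliptic δ a → ∀ W, IsSolution o a W →
      ∫ p in Qc d ρ, T W p ^ 2 ≤ N * ∫ p in Qc d R, W p ^ 2 := by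
  obtain ⟨N, hN, hbound⟩ := hT ρ R hρ hρR
  refine ⟨N, hN, fun a ha W hW => (hbound a ha W hW.contDiff).trans_eq ?_⟩
  congr 1
  refine setIntegral_congr_fun (isOpen_Qc d R).measurableSet fun p hp => ?_
  simp [hW.parabolicOp_eq_zero p (Qc_mono (hρ.trans hρR.le) hR hp)]

lemma HasInteriorBound.isControlled (hT : HasInteriorBound o δ T)
    (hcont : ∀ W, ContDiff ℝ ∞ W → Continuous (T W)) :
    IsControlled o δ fun W p => T W p ^ 2 :=
  ⟨fun W hW => (hcont W hW).pow 2, fun _ _ hρ hρR hR => hT.exists_integral_le hρ hρR hR⟩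

lemma isControlled_sq : IsControlled o δ fun W p => W p ^ 2 :=
  ⟨fun W hW => hW.continuous.pow 2, fun ρ R hρ hρR _ => ⟨1, zero_le_one, fun a _ W hW => by
    rw [one_mul]
    exact integral_Qc_mono_radius hρ hρR.le (hW.contDiff.continuous.pow 2) fun p => sq_nonneg _⟩⟩

lemma IsControlled.add (hΦ : IsControlled o δ Φ) (hΨ : IsControlled o δ Ψ) :
    IsControlled o δ fun W p => Φ W p + Ψ W p := by
  refine ⟨fun W hW => (hΦ.continuous W hW).add (hΨ.continuous W hW), fun ρ R hρ hρR hR => ?_⟩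
  obtain ⟨N₁, hN₁, hΦle⟩ := hΦ.integral_le ρ R hρ hρR hR
  obtain ⟨N₂, hN₂, hΨle⟩ := hΨ.integral_le ρ R hρ hρR hR
  refine ⟨N₁ + N₂, add_nonneg hN₁ hN₂, fun a ha W hW => ?_⟩
  rw [integral_Qc_add hρ (hΦ.continuous W hW.contDiff) (hΨ.continuous W hW.contDiff), add_mul]
  exact add_le_add (hΦle a ha W hW) (hΨle a ha W hW)

lemma IsControlled.congr (hΦ : IsControlled o δ Φ) (h : ∀ W, ContDiff ℝ ∞ W → Φ W = Ψ W) :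
    IsControlled o δ Ψ := by
  refine ⟨fun W hW => h W hW ▸ hΦ.continuous W hW, fun ρ R hρ hρR hR => ?_⟩
  obtain ⟨N, hN, hΦle⟩ := hΦ.integral_le ρ R hρ hρR hR
  exact ⟨N, hN, fun a ha W hW => h W hW.contDiff ▸ hΦle a ha W hW⟩

lemma IsControlled.comp (hΦ : IsControlled o δ Φ) (hT : HasInteriorBound o δ T)
    (hsol : PreservesSolutions o δ T) (hsmooth : ∀ W, ContDiff ℝ ∞ W → ContDiff ℝ ∞ (T W)) :
    IsControlled o δ fun W => Φ (T W) := by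
  refine ⟨fun W hW => hΦ.continuous _ (hsmooth W hW), fun ρ R hρ hρR hR => ?_⟩
  obtain ⟨r, hρr, hrR⟩ := exists_between hρR
  obtain ⟨N₁, hN₁, hΦle⟩ := hΦ.integral_le ρ r hρ hρr (hrR.le.trans hR)
  obtain ⟨N₂, hN₂, hTle⟩ := hT.exists_integral_le (hρ.trans hρr.le) hrR hR
  refine ⟨N₁ * N₂, mul_nonneg hN₁ hN₂, fun a ha W hW => (hΦle a ha _ (hsol a ha W hW)).trans ?_⟩
  rw [mul_assoc]
  exact mul_le_mul_of_nonneg_left (hTle a ha W hW) hN₁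

/- Tangential derivatives of solutions are solutions, so they may be iterated; in the normal
direction `o` the equation only gives two derivatives. -/
lemma isControlled_derivSumSq (hδ : 0 < δ) {l : List (Fin d)} (hl : o ∉ l) :
    IsControlled o δ fun W p => derivSumSq (l ++ [o]) W p + derivSumSq (l ++ [o]) (pdx o W) p := by
  induction l with
  | nil =>
    have hpdx : IsControlled o δ fun W p => pdx o W p ^ 2 :=
      (hasInteriorBound_pdx hδ o).isControlled fun W hW => by fun_prop
    have hpdxx : IsControlled o δ fun W p => pdxx o o W p ^ 2 :=
      (hasInteriorBound_pdxx hδ o o).isControlled fun W hW => by fun_prop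
    exact (isControlled_sq.add hpdx).add (hpdx.add hpdxx)
  | cons i l ih =>
    rw [List.mem_cons, not_or] at hl
    have hi : i ≠ o := Ne.symm hl.1
    refine ((ih hl.2).add ((ih hl.2).comp (hasInteriorBound_pdx hδ i)
      (preservesSolutions_pdx hi) fun W hW => by fun_prop)).congr fun W hW => ?_
    funext p
    simp only [List.cons_append, derivSumSq, pdx_pdx_comm hW i o]
    ring

lemma HasSupBound.comp (hD : HasSupBound o δ D) (hT : HasInteriorBound o δ T)
    (hsol : PreservesSolutions o δ T) : HasSupBound o δ fun W => D (T W) := by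
  intro R hR hR1
  obtain ⟨r, hr, hrR⟩ := exists_between hR
  obtain ⟨K, hK, hsup⟩ := hD r hr (hrR.le.trans hR1)
  obtain ⟨N, hN, hTle⟩ := hT.exists_integral_le (by linarith) hrR hR1
  refine ⟨K * N, mul_nonneg hK hN, fun a ha W hW p hp =>
    (hsup a ha _ (hsol a ha W hW) p hp).trans ?_⟩
  rw [mul_assoc]
  exact mul_le_mul_of_nonneg_left (hTle a ha W hW) hK

lemma IsControlled.hasSupBound {l : List (Fin d)} (hl : l.Nodup)
    (huniv : l.toFinset = Finset.univ) (hsmooth : ∀ W, ContDiff ℝ ∞ W → ContDiff ℝ ∞ (D W))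
    (hΦ : IsControlled o δ Φ)
    (hle : ∀ W, ContDiff ℝ ∞ W → ∀ p, derivSumSq l (D W) p + derivSumSq l (pdt (D W)) p ≤ Φ W p) :
    HasSupBound o δ D := by
  intro R hR hR1
  obtain ⟨K, hK, hsob⟩ := exists_sq_le_integral_derivSumSq hl huniv
  obtain ⟨N, hN, hΦle⟩ := hΦ.integral_le (1 / 2) R (by norm_num) hR hR1
  refine ⟨K * N, mul_nonneg hK hN, fun a ha W hW p hp => ?_⟩
  have hDW := hsmooth W hW.contDiff
  calc D W p ^ 2
      ≤ K * ∫ q in Qc d (1 / 2), (derivSumSq l (D W) q + derivSumSq l (pdt (D W)) q) :=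
        hsob _ hDW p hp
    _ ≤ K * ∫ q in Qc d (1 / 2), Φ W q := by
        refine mul_le_mul_of_nonneg_left ?_ hK
        exact integral_Qc_mono one_half_pos.le (by fun_prop) (hΦ.continuous W hW.contDiff)
          fun q _ => hle W hW.contDiff q
    _ ≤ K * (N * ∫ q in Qc d R, W q ^ 2) := by
        gcongr
        exact hΦle a ha W hW
    _ = K * N * ∫ q in Qc d R, W q ^ 2 := by ring

lemma exists_nodup_append_singleton (o : Fin d) :
    ∃ l : List (Fin d), o ∉ l ∧ (l ++ [o]).Nodup ∧ (l ++ [o]).toFinset = Finset.univ := by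
  have ho : o ∉ (Finset.univ.erase o).toList := by simp
  refine ⟨(Finset.univ.erase o).toList, ho, ?_, ?_⟩
  · simpa [List.nodup_append] using Finset.nodup_toList _
  · ext j
    by_cases hj : j = o <;> simp [hj]

lemma hasSupBound_id_and_normal (hδ : 0 < δ) :
    HasSupBound o δ id ∧ HasSupBound o δ (pdx o) := by
  obtain ⟨l, ho, hl, huniv⟩ := exists_nodup_append_singleton o
  have hcontrol := isControlled_derivSumSq hδ ho
  have hsum := hcontrol.add (hcontrol.comp (hasInteriorBound_pdt hδ) preservesSolutions_pdt
    fun W hW => by fun_prop)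
  refine ⟨hsum.hasSupBound hl huniv (fun W hW => hW) fun W _ p => ?_,
    hsum.hasSupBound hl huniv (fun W hW => by fun_prop) fun W hW p => ?_⟩
  · simp only [id_eq]
    linarith [derivSumSq_nonneg (l ++ [o]) (pdx o W) p,
      derivSumSq_nonneg (l ++ [o]) (pdx o (pdt W)) p]
  · rw [← pdx_pdt_comm hW]
    linarith [derivSumSq_nonneg (l ++ [o]) W p, derivSumSq_nonneg (l ++ [o]) (pdt W) p]

lemma hasSupBound_id (hδ : 0 < δ) : HasSupBound o δ id := (hasSupBound_id_and_normal hδ).1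

lemma hasSupBound_pdt (hδ : 0 < δ) : HasSupBound o δ pdt :=
  (hasSupBound_id hδ).comp (hasInteriorBound_pdt hδ) preservesSolutions_pdt

lemma hasSupBound_pdx (hδ : 0 < δ) (k : Fin d) : HasSupBound o δ (pdx k) := by
  by_cases hk : k = o
  · exact hk ▸ (hasSupBound_id_and_normal hδ).2
  · exact (hasSupBound_id hδ).comp (hasInteriorBound_pdx hδ k) (preservesSolutions_pdx hk)

lemma hasSupBound_pdx_pdx (hδ : 0 < δ) (j : Fin d) {k : Fin d} (hk : k ≠ o) :
    HasSupBound o δ fun W => pdx j (pdx k W) :=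
  (hasSupBound_pdx hδ j).comp (hasInteriorBound_pdx hδ k) (preservesSolutions_pdx hk)

end Solutions

/-! ### Solutions with prescribed boundary data -/

/-- The squared Frobenius norm `|u_{xx}|²` of the spatial Hessian. -/
noncomputable def hessianSq {d : ℕ} (u : ℝ × (Fin d → ℝ) → ℝ) : ℝ × (Fin d → ℝ) → ℝ :=
  fun p => ∑ j, ∑ k, pdxx j k u p ^ 2

/-- The integral over the unit cylinder that controls a solution with boundary data `u`. -/
noncomputable def dataEnergy {d : ℕ} (o : Fin d) (a : ℝ → Fin d → Fin d → ℝ)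
    (u : ℝ × (Fin d → ℝ) → ℝ) : ℝ :=
  ∫ p in Qc d 1, (parabolicOp o a u p ^ 2 + hessianSq u p)

/-- `h` solves `L₀ h = 0` in the unit cylinder and equals the smooth function `u` on its
parabolic boundary. -/
structure IsSolutionWithData {d : ℕ} (o : Fin d) (a : ℝ → Fin d → Fin d → ℝ)
    (u h : ℝ × (Fin d → ℝ) → ℝ) : Prop extends IsSolution o a h where
  contDiff_data : ContDiff ℝ ∞ u
  eq_data : ∀ p ∈ pbQc d 1, h p = u p

/-- The `L²` norm of `D h` over `Q_{3/4}` is controlled by the energy of the boundary data of `h`,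
uniformly over all solutions `h`. -/
def HasDataBound {d : ℕ} (o : Fin d) (δ : ℝ)
    (D : (ℝ × (Fin d → ℝ) → ℝ) → ℝ × (Fin d → ℝ) → ℝ) : Prop :=
  ∃ N : ℝ, 0 ≤ N ∧ ∀ a, IsUniformlyElliptic δ a → ∀ u h, IsSolutionWithData o a u h →
    ∫ p in Qc d (3 / 4), D h p ^ 2 ≤ N * dataEnergy o a u

/-- The supremum of `D h` over `Q_{1/4}` is controlled by the energy of the boundary data of `h`,
uniformly over all solutions `h`. -/
def HasDataSupBound {d : ℕ} (o : Fin d) (δ : ℝ)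
    (D : (ℝ × (Fin d → ℝ) → ℝ) → ℝ × (Fin d → ℝ) → ℝ) : Prop :=
  ∃ N : ℝ, 0 ≤ N ∧ ∀ a, IsUniformlyElliptic δ a → ∀ u h, IsSolutionWithData o a u h →
    ∀ p ∈ Qc d (1 / 4), D h p ^ 2 ≤ N * dataEnergy o a u

section BoundaryData

variable {d : ℕ} {o : Fin d} {δ : ℝ} {a : ℝ → Fin d → Fin d → ℝ}
  {f g u h : ℝ × (Fin d → ℝ) → ℝ} {D T : (ℝ × (Fin d → ℝ) → ℝ) → ℝ × (Fin d → ℝ) → ℝ}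

lemma hessianSq_nonneg (u : ℝ × (Fin d → ℝ) → ℝ) (p : ℝ × (Fin d → ℝ)) : 0 ≤ hessianSq u p :=
  Finset.sum_nonneg fun _ _ => Finset.sum_nonneg fun _ _ => sq_nonneg _

@[fun_prop] lemma continuous_hessianSq (hu : ContDiff ℝ ∞ u) : Continuous (hessianSq u) := by
  unfold hessianSq
  fun_prop

lemma pdxx_sq_le_hessianSq (u : ℝ × (Fin d → ℝ) → ℝ) (j k : Fin d) (p : ℝ × (Fin d → ℝ)) :
    pdxx j k u p ^ 2 ≤ hessianSq u p :=
  (Finset.single_le_sum (f := fun k => pdxx j k u p ^ 2) (fun _ _ => sq_nonneg _)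
    (Finset.mem_univ k)).trans
    (Finset.single_le_sum (f := fun j => ∑ k, pdxx j k u p ^ 2)
      (fun _ _ => Finset.sum_nonneg fun _ _ => sq_nonneg _) (Finset.mem_univ j))

lemma dataEnergy_nonneg (o : Fin d) (a : ℝ → Fin d → Fin d → ℝ) (u : ℝ × (Fin d → ℝ) → ℝ) :
    0 ≤ dataEnergy o a u :=
  integral_nonneg fun p => add_nonneg (sq_nonneg _) (hessianSq_nonneg u p)

lemma pdxx_sub (hf : ContDiff ℝ ∞ f) (hg : ContDiff ℝ ∞ g) (j k : Fin d) :
    pdxx j k (fun p => f p - g p) = fun p => pdxx j k f p - pdxx j k g p := by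
  have hf' := hf.differentiable (by simp)
  have hg' := hg.differentiable (by simp)
  simp (disch := fun_prop) only [pdxx, pdx_sub]

lemma parabolicOp_sub (hf : ContDiff ℝ ∞ f) (hg : ContDiff ℝ ∞ g) :
    parabolicOp o a (fun p => f p - g p) =
      fun p => parabolicOp o a f p - parabolicOp o a g p := by
  funext p
  simp only [parabolicOp, pdxx_sub hf hg, pdt_sub (hf.differentiable (by simp))
    (hg.differentiable (by simp)), mul_sub, Finset.sum_sub_distrib]
  ring

lemma pdt_sq_le (ha : IsUniformlyElliptic δ a) (o : Fin d) (u : ℝ × (Fin d → ℝ) → ℝ)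
    (p : ℝ × (Fin d → ℝ)) :
    pdt u p ^ 2 ≤ 2 * parabolicOp o a u p ^ 2 + 2 * d ^ 2 * δ⁻¹ ^ 2 * hessianSq u p := by
  set S := ∑ j, ∑ k, a (p.2 o) j k * pdxx j k u p with hS
  have hSsq : S ^ 2 ≤ d ^ 2 * δ⁻¹ ^ 2 * hessianSq u p := by
    have := sq_sum_mul_le_card_mul Finset.univ (fun q : Fin d × Fin d => pdxx q.1 q.2 u p)
      fun q _ => ha.abs_le (p.2 o) q.1 q.2
    simpa only [Fintype.sum_prod_type, Finset.card_univ, Fintype.card_prod, Fintype.card_fin,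
      Nat.cast_pow, ← sq, hS, hessianSq] using this
  have heq : pdt u p = parabolicOp o a u p - S := by simp [parabolicOp, hS]
  rw [heq]
  nlinarith [sq_nonneg (parabolicOp o a u p + S)]

lemma integral_sub_sq_add_parabolicOp_sq_le (ha : IsUniformlyElliptic δ a)
    (hh : IsSolutionWithData o a u h) :
    ∫ p in Qc d 1, ((h p - u p) ^ 2 + parabolicOp o a (fun q => h q - u q) p ^ 2) ≤
      (16 * δ⁻¹ ^ 6 + 1) * dataEnergy o a u := by
  have hδ := ha.pos
  have hu := hh.contDiff_data
  have hv : ContDiff ℝ ∞ fun q => h q - u q := hh.contDiff.sub hu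
  have hvc := hv.continuous
  have hoperator : ∫ p in Qc d 1, parabolicOp o a (fun q => h q - u q) p ^ 2 ≤
      dataEnergy o a u := by
    refine integral_Qc_mono zero_le_one (by fun_prop) (by fun_prop) fun p hp => ?_
    rw [parabolicOp_sub hh.contDiff hu]
    simp only [hh.parabolicOp_eq_zero p hp, zero_sub, neg_sq]
    exact le_add_of_nonneg_right (hessianSq_nonneg u p)
  have henergy := integral_sq_le_of_eq_zero ha o hv fun p hp => sub_eq_zero.2 (hh.eq_data p hp)
  rw [integral_Qc_add zero_le_one (by fun_prop) (by fun_prop), add_mul, one_mul]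
  refine add_le_add (henergy.trans ?_) hoperator
  gcongr

/- Interior estimates apply to `h - u`, which vanishes on the parabolic boundary; the remaining
term `D u` is bounded pointwise. -/
lemma HasInteriorBound.hasDataBound (hD : HasInteriorBound o δ D)
    (hcont : ∀ f, ContDiff ℝ ∞ f → Continuous (D f))
    (hsub : ∀ f g, ContDiff ℝ ∞ f → ContDiff ℝ ∞ g →
      D (fun p => f p - g p) = fun p => D f p - D g p)
    {B : ℝ} (hB : 0 ≤ B)
    (hle : ∀ a, IsUniformlyElliptic δ a → ∀ u, ContDiff ℝ ∞ u → ∀ p,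
      D u p ^ 2 ≤ B * (parabolicOp o a u p ^ 2 + hessianSq u p)) :
    HasDataBound o δ D := by
  obtain ⟨N, hN, hintegrable⟩ := hD (3 / 4) 1 (by norm_num) (by norm_num)
  refine ⟨2 * (N * (16 * δ⁻¹ ^ 6 + 1)) + 2 * B, by positivity, fun a ha u h hh => ?_⟩
  have hu := hh.contDiff_data
  have hr : (0 : ℝ) ≤ 3 / 4 := by norm_num
  have hDh := hcont h hh.contDiff
  have hdiff : ∫ p in Qc d (3 / 4), (D h p - D u p) ^ 2 ≤
      N * ((16 * δ⁻¹ ^ 6 + 1) * dataEnergy o a u) := by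
    have := hintegrable a ha _ (hh.contDiff.sub hu)
    rw [hsub h u hh.contDiff hu] at this
    exact this.trans (mul_le_mul_of_nonneg_left (integral_sub_sq_add_parabolicOp_sq_le ha hh) hN)
  have hdata : ∫ p in Qc d (3 / 4), D u p ^ 2 ≤ B * dataEnergy o a u := by
    rw [dataEnergy, ← integral_const_mul]
    exact (integral_Qc_mono_radius hr (by norm_num) (by fun_prop) fun p => sq_nonneg _).trans
      (integral_Qc_mono zero_le_one (by fun_prop) (by fun_prop) fun p _ => hle a ha u hu p)
  calc ∫ p in Qc d (3 / 4), D h p ^ 2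
      ≤ ∫ p in Qc d (3 / 4), (2 * (D h p - D u p) ^ 2 + 2 * D u p ^ 2) :=
        integral_Qc_mono hr (by fun_prop) (by fun_prop) fun p _ => by
          linarith [sq_nonneg (D h p - 2 * D u p)]
    _ = 2 * (∫ p in Qc d (3 / 4), (D h p - D u p) ^ 2) + 2 * ∫ p in Qc d (3 / 4), D u p ^ 2 := by
        rw [integral_Qc_add hr (by fun_prop) (by fun_prop), integral_const_mul, integral_const_mul]
    _ ≤ _ := by linarith

lemma hasDataBound_pdt (hδ : 0 < δ) : HasDataBound o δ pdt := by
  refine (hasInteriorBound_pdt hδ).hasDataBound (fun f hf => by fun_prop)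
    (fun f g hf hg => pdt_sub (hf.differentiable (by simp)) (hg.differentiable (by simp)))
    (B := 2 + 2 * d ^ 2 * δ⁻¹ ^ 2) (by positivity) fun a ha u _ p => (pdt_sq_le ha o u p).trans ?_
  have hL : 0 ≤ 2 * d ^ 2 * δ⁻¹ ^ 2 * parabolicOp o a u p ^ 2 := by positivity
  linarith [hessianSq_nonneg u p]

lemma hasDataBound_pdxx (hδ : 0 < δ) (j k : Fin d) : HasDataBound o δ (pdxx j k) := by
  refine (hasInteriorBound_pdxx hδ j k).hasDataBound (fun f hf => by fun_prop)
    (fun f g hf hg => pdxx_sub hf hg j k) zero_le_one fun a _ u _ p => ?_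
  linarith [pdxx_sq_le_hessianSq u j k p, sq_nonneg (parabolicOp o a u p)]

lemma HasSupBound.hasDataSupBound (hD : HasSupBound o δ D) (hT : HasDataBound o δ T)
    (hsol : PreservesSolutions o δ T) : HasDataSupBound o δ fun f => D (T f) := by
  obtain ⟨K, hK, hsup⟩ := hD (3 / 4) (by norm_num) (by norm_num)
  obtain ⟨N, hN, hintegrable⟩ := hT
  refine ⟨K * N, mul_nonneg hK hN, fun a ha u h hh p hp =>
    (hsup a ha _ (hsol a ha h hh.toIsSolution) p hp).trans ?_⟩
  rw [mul_assoc]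
  exact mul_le_mul_of_nonneg_left (hintegrable a ha u h hh) hK

lemma HasDataSupBound.congr (hD : HasDataSupBound o δ D)
    (hDT : ∀ f, ContDiff ℝ ∞ f → D f = T f) : HasDataSupBound o δ T := by
  obtain ⟨N, hN, hle⟩ := hD
  exact ⟨N, hN, fun a ha u h hh => hDT h hh.contDiff ▸ hle a ha u h hh⟩

lemma preservesSolutions_pdxx {j k : Fin d} (hj : j ≠ o) (hk : k ≠ o) :
    PreservesSolutions o δ (pdxx j k) := fun a ha W hW =>
  preservesSolutions_pdx hj a ha _ (preservesSolutions_pdx hk a ha W hW)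

lemma hasDataSupBound_pdt_pdt (hδ : 0 < δ) : HasDataSupBound o δ fun h => pdt (pdt h) :=
  (hasSupBound_pdt hδ).hasDataSupBound (hasDataBound_pdt hδ) preservesSolutions_pdt

lemma hasDataSupBound_pdx_pdt (hδ : 0 < δ) (m : Fin d) :
    HasDataSupBound o δ fun h => pdx m (pdt h) :=
  (hasSupBound_pdx hδ m).hasDataSupBound (hasDataBound_pdt hδ) preservesSolutions_pdt

lemma hasDataSupBound_pdt_pdxx (hδ : 0 < δ) (j : Fin d) {k : Fin d} (hk : k ≠ o) :
    HasDataSupBound o δ fun h => pdt (pdxx j k h) :=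
  ((hasSupBound_pdx_pdx hδ j hk).hasDataSupBound (hasDataBound_pdt hδ)
    preservesSolutions_pdt).congr fun f hf => by
      rw [pdx_pdt_comm hf, pdx_pdt_comm (contDiff_pdx hf k), pdxx]

lemma hasDataSupBound_pdx_pdxx_tangential (hδ : 0 < δ) (m : Fin d) {j k : Fin d} (hj : j ≠ o)
    (hk : k ≠ o) : HasDataSupBound o δ fun h => pdx m (pdxx j k h) :=
  (hasSupBound_pdx hδ m).hasDataSupBound (hasDataBound_pdxx hδ j k)
    (preservesSolutions_pdxx hj hk)

lemma hasDataSupBound_pdxx_pdx_of_ne (hδ : 0 < δ) {i j k : Fin d} (hij : (i, j) ≠ (o, o))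
    (hk : k ≠ o) : HasDataSupBound o δ fun h => pdxx i j (pdx k h) := by
  by_cases hj : j = o
  · have hi : i ≠ o := fun hi => hij (by rw [hi, hj])
    exact (hasDataSupBound_pdx_pdxx_tangential hδ j hi hk).congr fun f hf =>
      (pdx_pdx_comm (contDiff_pdx hf k) i j).symm
  · exact hasDataSupBound_pdx_pdxx_tangential hδ i hj hk

lemma exists_mixedHessianSq_pdx_le (hδ : 0 < δ) {k : Fin d} (hk : k ≠ o) :
    ∃ N : ℝ, 0 ≤ N ∧ ∀ a, IsUniformlyElliptic δ a → ∀ u h, IsSolutionWithData o a u h →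
      ∀ p ∈ Qc d (1 / 4), mixedHessianSq o (pdx k h) p ≤ N * dataEnergy o a u := by
  have hmixed : ∀ q ∈ Finset.univ.erase (o, o),
      HasDataSupBound o δ fun h => pdxx q.1 q.2 (pdx k h) := fun q hq =>
    hasDataSupBound_pdxx_pdx_of_ne hδ (Finset.ne_of_mem_erase hq) hk
  choose! N hN hle using hmixed
  refine ⟨∑ q ∈ Finset.univ.erase (o, o), N q, Finset.sum_nonneg hN, fun a ha u h hh p hp => ?_⟩
  rw [Finset.sum_mul]
  exact Finset.sum_le_sum fun q hq => hle q hq a ha u h hh p hp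

/- `∂_o² ∂_k h` is not a derivative of a solution by tangential derivatives alone; it is recovered
from the equation for `∂_k h`. -/
lemma hasDataSupBound_pdxx_pdx_normal (hδ : 0 < δ) {k : Fin d} (hk : k ≠ o) :
    HasDataSupBound o δ fun h => pdxx o o (pdx k h) := by
  obtain ⟨N, hN, hmixed⟩ := exists_mixedHessianSq_pdx_le hδ hk
  obtain ⟨M, hM, htime⟩ := hasDataSupBound_pdx_pdt (o := o) hδ k
  set K := 2 * δ⁻¹ ^ 2 + 2 * (d : ℝ) ^ 2 * δ⁻¹ ^ 4
  refine ⟨2 * (K * N) + 2 * (δ⁻¹ ^ 2 * M), by positivity, fun a ha u h hh p hp => ?_⟩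
  have hp1 : p ∈ Qc d 1 := Qc_mono (by norm_num) (by norm_num) hp
  have hsum : (timeCoeff o a p * pdt (pdx k h) p + pdxx o o (pdx k h) p) ^ 2 ≤
      K * (N * dataEnergy o a u) := by
    refine (sq_timeCoeff_mul_pdt_add_normal_le ha (pdx k h) p).trans ?_
    rw [(preservesSolutions_pdx hk a ha h hh.toIsSolution).parabolicOp_eq_zero p hp1,
      zero_pow two_ne_zero, zero_add]
    exact mul_le_mul_of_nonneg_left (hmixed a ha u h hh p hp) (by positivity)
  have htimeTerm : (timeCoeff o a p * pdt (pdx k h) p) ^ 2 ≤ δ⁻¹ ^ 2 * (M * dataEnergy o a u) := by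
    rw [mul_pow, ← pdx_pdt_comm hh.contDiff]
    have hc := ha.timeCoeff_le o p
    have hc0 := (ha.timeCoeff_pos o p).le
    have := htime a ha u h hh p hp
    gcongr
  linarith [sq_nonneg (2 * (timeCoeff o a p * pdt (pdx k h) p) + pdxx o o (pdx k h) p)]

lemma hasDataSupBound_pdx_pdxx (hδ : 0 < δ) (m j : Fin d) {k : Fin d} (hk : k ≠ o) :
    HasDataSupBound o δ fun h => pdx m (pdxx j k h) := by
  by_cases hmj : (m, j) = (o, o)
  · obtain ⟨rfl, rfl⟩ := Prod.mk.inj hmj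
    exact hasDataSupBound_pdxx_pdx_normal hδ hk
  · exact hasDataSupBound_pdxx_pdx_of_ne hδ hmj hk

end BoundaryData

/-! ### Mean oscillation -/

/-- The squared mean oscillation `⨍_{Q_r} |w - (w)_{Q_r}|²`. -/
noncomputable def meanOscSq {d : ℕ} (r : ℝ) (w : ℝ × (Fin d → ℝ) → ℝ) : ℝ :=
  avg (Qc d r) fun p => (w p - avg (Qc d r) w) ^ 2

/-- The operators `∂_t` and `∂_j ∂_k` with `k ≠ o`, whose values on solutions have controlled
oscillation. -/
def tangentialOps {d : ℕ} (o : Fin d) : Set ((ℝ × (Fin d → ℝ) → ℝ) → ℝ × (Fin d → ℝ) → ℝ) :=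
  insert pdt {D | ∃ j k, k ≠ o ∧ D = pdxx j k}

section MeanOscillation

variable {d : ℕ} {o : Fin d} {δ r c S : ℝ} {f g w : ℝ × (Fin d → ℝ) → ℝ} {p q : ℝ × (Fin d → ℝ)}
  {D : (ℝ × (Fin d → ℝ) → ℝ) → ℝ × (Fin d → ℝ) → ℝ}

lemma volume_Qc_toReal_pos (hr : 0 < r) : 0 < (volume (Qc d r)).toReal :=
  ENNReal.toReal_pos (volume_Qc_pos hr).ne' (volume_Qc_lt_top hr.le).ne

lemma avg_Qc_le (hf : Continuous f) (hr : 0 < r) (h : ∀ p ∈ Qc d r, f p ≤ c) :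
    avg (Qc d r) f ≤ c := by
  have hintegrable := integral_Qc_mono hr.le hf continuous_const h
  rw [setIntegral_const, smul_eq_mul] at hintegrable
  exact (inv_mul_le_iff₀ (volume_Qc_toReal_pos hr)).2 hintegrable

lemma le_avg_Qc (hf : Continuous f) (hr : 0 < r) (h : ∀ p ∈ Qc d r, c ≤ f p) :
    c ≤ avg (Qc d r) f := by
  have hintegrable := integral_Qc_mono hr.le continuous_const hf h
  rw [setIntegral_const, smul_eq_mul] at hintegrable
  exact (le_inv_mul_iff₀ (volume_Qc_toReal_pos hr)).2 hintegrable

lemma avg_Qc_congr (h : Set.EqOn f g (Qc d r)) : avg (Qc d r) f = avg (Qc d r) g := by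
  rw [avg, avg, setIntegral_congr_fun (isOpen_Qc d r).measurableSet h]

lemma meanOscSq_congr (h : Set.EqOn f g (Qc d r)) : meanOscSq r f = meanOscSq r g := by
  rw [meanOscSq, meanOscSq, avg_Qc_congr h]
  exact avg_Qc_congr fun p hp => by simp only [h hp]

lemma meanOscSq_le_of_abs_sub_le (hw : Continuous w) (hr : 0 < r)
    (h : ∀ p ∈ Qc d r, ∀ q ∈ Qc d r, |w p - w q| ≤ c) : meanOscSq r w ≤ c ^ 2 := by
  refine avg_Qc_le (by fun_prop) hr fun p hp => sq_le_sq' ?_ ?_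
  · have : avg (Qc d r) w ≤ w p + c :=
      avg_Qc_le hw hr fun q hq => by linarith [(abs_le.1 (h p hp q hq)).1]
    linarith
  · have : w p - c ≤ avg (Qc d r) w :=
      le_avg_Qc hw hr fun q hq => by linarith [(abs_le.1 (h p hp q hq)).2]
    linarith

lemma convexOn_sum_sq : ConvexOn ℝ Set.univ fun x : Fin d → ℝ => ∑ j, x j ^ 2 := by
  refine ⟨convex_univ, fun x _ y _ s t hs ht hst => ?_⟩
  simp only [Pi.add_apply, Pi.smul_apply, smul_eq_mul, Finset.mul_sum, ← Finset.sum_add_distrib]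
  exact Finset.sum_le_sum fun j _ =>
    even_two.convexOn_pow.2 (Set.mem_univ (x j)) (Set.mem_univ (y j)) hs ht hst

lemma convex_Qc (d : ℕ) (r : ℝ) : Convex ℝ (Qc d r) := by
  refine (convex_Ioo _ _).prod ?_
  simpa [ballE] using convexOn_sum_sq.convex_lt (r ^ 2)

lemma norm_sub_le_of_mem_Qc (hr0 : 0 ≤ r) (hr1 : r ≤ 1) (hp : p ∈ Qc d r) (hq : q ∈ Qc d r) :
    ‖p - q‖ ≤ 2 * r := by
  refine max_le ?_ ?_
  · have hsq : r ^ 2 ≤ r := by nlinarith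
    have htime := abs_sub_lt_of_nonneg_of_lt hp.1.1.le hp.1.2 hq.1.1.le hq.1.2
    rw [Prod.fst_sub, Real.norm_eq_abs]
    linarith
  · have hp' := mem_closedBall_zero_iff.1 (ballE_subset_closedBall hr0 hp.2)
    have hq' := mem_closedBall_zero_iff.1 (ballE_subset_closedBall hr0 hq.2)
    exact (norm_sub_le p.2 q.2).trans (by linarith)

lemma norm_fderiv_le_of_sq_le (ht : pdt w p ^ 2 ≤ S) (hx : ∀ m, pdx m w p ^ 2 ≤ S) :
    ‖fderiv ℝ w p‖ ≤ (d + 1) * √S := by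
  refine ContinuousLinearMap.opNorm_le_bound _ (by positivity) fun e => ?_
  rw [fderiv_apply_eq_sum]
  have htime : |e.1 * pdt w p| ≤ ‖e‖ * √S := by
    rw [abs_mul]
    exact mul_le_mul (norm_fst_le e) (Real.abs_le_sqrt ht) (abs_nonneg _) (norm_nonneg _)
  have hspace : ∀ j, |e.2 j * pdx j w p| ≤ ‖e‖ * √S := fun j => by
    rw [abs_mul]
    exact mul_le_mul ((norm_le_pi_norm e.2 j).trans (norm_snd_le e)) (Real.abs_le_sqrt (hx j))
      (abs_nonneg _) (norm_nonneg _)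
  calc |e.1 * pdt w p + ∑ j, e.2 j * pdx j w p|
      ≤ |e.1 * pdt w p| + ∑ j, |e.2 j * pdx j w p| :=
        (abs_add_le _ _).trans (by gcongr; exact Finset.abs_sum_le_sum_abs _ _)
    _ ≤ ‖e‖ * √S + ∑ _j : Fin d, ‖e‖ * √S :=
        add_le_add htime (Finset.sum_le_sum fun j _ => hspace j)
    _ = (d + 1) * √S * ‖e‖ := by
        rw [Finset.sum_const, Finset.card_univ, Fintype.card_fin, nsmul_eq_mul]
        ring

lemma meanOscSq_le_of_deriv_sq_le (hw : ContDiff ℝ ∞ w) (hr : 0 < r) (hr1 : r ≤ 1) (hS : 0 ≤ S)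
    (ht : ∀ p ∈ Qc d r, pdt w p ^ 2 ≤ S) (hx : ∀ p ∈ Qc d r, ∀ m, pdx m w p ^ 2 ≤ S) :
    meanOscSq r w ≤ 4 * (d + 1) ^ 2 * S * r ^ 2 := by
  have hdiff : ∀ p ∈ Qc d r, ∀ q ∈ Qc d r, |w p - w q| ≤ (d + 1) * √S * (2 * r) :=
    fun p hp q hq => ((convex_Qc d r).norm_image_sub_le_of_norm_fderiv_le
      (fun x _ => hw.differentiable (by simp) x)
      (fun x hx' => norm_fderiv_le_of_sq_le (ht x hx') (hx x hx')) hq hp).trans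
      (mul_le_mul_of_nonneg_left (norm_sub_le_of_mem_Qc hr.le hr1 hp hq) (by positivity))
  refine (meanOscSq_le_of_abs_sub_le hw.continuous hr hdiff).trans_eq ?_
  rw [mul_pow, mul_pow, Real.sq_sqrt hS]
  ring

lemma finite_tangentialOps (o : Fin d) : (tangentialOps o).Finite := by
  refine ((Set.finite_range fun q : Fin d × Fin d => pdxx q.1 q.2).subset ?_).insert pdt
  rintro D ⟨j, k, -, rfl⟩
  exact ⟨(j, k), rfl⟩

lemma contDiff_of_mem_tangentialOps (hD : D ∈ tangentialOps o) (hf : ContDiff ℝ ∞ f) :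
    ContDiff ℝ ∞ (D f) := by
  obtain rfl | ⟨j, k, -, rfl⟩ := hD <;> fun_prop

lemma hasDataSupBound_pdt_of_mem_tangentialOps (hδ : 0 < δ) (hD : D ∈ tangentialOps o) :
    HasDataSupBound o δ fun h => pdt (D h) := by
  obtain rfl | ⟨j, k, hk, rfl⟩ := hD
  exacts [hasDataSupBound_pdt_pdt hδ, hasDataSupBound_pdt_pdxx hδ j hk]

lemma hasDataSupBound_pdx_of_mem_tangentialOps (hδ : 0 < δ) (hD : D ∈ tangentialOps o)
    (m : Fin d) : HasDataSupBound o δ fun h => pdx m (D h) := by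
  obtain rfl | ⟨j, k, hk, rfl⟩ := hD
  exacts [hasDataSupBound_pdx_pdt hδ m, hasDataSupBound_pdx_pdxx hδ m j hk]

lemma exists_meanOscSq_le_dataEnergy (hδ : 0 < δ) (hD : D ∈ tangentialOps o) :
    ∃ N : ℝ, 0 ≤ N ∧ ∀ a, IsUniformlyElliptic δ a → ∀ u h, IsSolutionWithData o a u h →
      ∀ r, 0 < r → r ≤ 1 / 4 → meanOscSq r (D h) ≤ N * r ^ 2 * dataEnergy o a u := by
  obtain ⟨N, hN, htime⟩ := hasDataSupBound_pdt_of_mem_tangentialOps hδ hD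
  choose M hM hspace using hasDataSupBound_pdx_of_mem_tangentialOps hδ hD
  have hM' : 0 ≤ ∑ m, M m := Finset.sum_nonneg fun m _ => hM m
  refine ⟨4 * (d + 1) ^ 2 * (N + ∑ m, M m), by positivity, fun a ha u h hh r hr hr4 => ?_⟩
  have hE := dataEnergy_nonneg o a u
  have hsub : Qc d r ⊆ Qc d (1 / 4) := Qc_mono hr.le hr4
  refine (meanOscSq_le_of_deriv_sq_le (S := (N + ∑ m, M m) * dataEnergy o a u)
    (contDiff_of_mem_tangentialOps hD hh.contDiff) hr (by linarith) (by positivity)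
    (fun p hp => (htime a ha u h hh p (hsub hp)).trans ?_)
    fun p hp m => (hspace m a ha u h hh p (hsub hp)).trans ?_).trans_eq (by ring)
  · gcongr
    exact le_add_of_nonneg_right hM'
  · gcongr
    exact (Finset.single_le_sum (fun m _ => hM m) (Finset.mem_univ m)).trans
      (le_add_of_nonneg_left hN)

lemma IsUniformlyElliptic.dataEnergy_eq {a : ℝ → Fin d → Fin d → ℝ} {u : ℝ × (Fin d → ℝ) → ℝ}
    (ha : IsUniformlyElliptic δ a) (o : Fin d) (hu : ContDiff ℝ ∞ u) :
    dataEnergy o a u = (volume (Qc d 1)).toReal *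
      (avg (Qc d 1) (fun p => parabolicOp o a u p ^ 2) + avg (Qc d 1) (hessianSq u)) := by
  rw [dataEnergy, integral_Qc_add zero_le_one (by fun_prop) (by fun_prop), avg, avg, ← mul_add,
    mul_inv_cancel_left₀ (volume_Qc_toReal_pos one_pos).ne']

lemma exists_meanOscSq_le_unit (hδ : 0 < δ) (hD : D ∈ tangentialOps o) :
    ∃ N : ℝ, 0 ≤ N ∧ ∀ a, IsUniformlyElliptic δ a → ∀ u h, IsSolutionWithData o a u h →
      ∀ r, 0 < r → r ≤ 1 / 4 → meanOscSq r (D h) ≤ N * r ^ 2 *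
        (avg (Qc d 1) (fun p => parabolicOp o a u p ^ 2) + avg (Qc d 1) (hessianSq u)) := by
  obtain ⟨N, hN, hle⟩ := exists_meanOscSq_le_dataEnergy hδ hD
  refine ⟨N * (volume (Qc d 1)).toReal, by positivity, fun a ha u h hh r hr hr4 =>
    (hle a ha u h hh r hr hr4).trans_eq ?_⟩
  rw [ha.dataEnergy_eq o hh.contDiff_data]
  ring

end MeanOscillation

/-! ### Parabolic scaling -/

lemma setAverage_image_eq_of_injective {E F : Type*} [NormedAddCommGroup E] [NormedSpace ℝ E]
    [FiniteDimensional ℝ E] [MeasurableSpace E] [BorelSpace E] [NormedAddCommGroup F]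
    [NormedSpace ℝ F] (μ : Measure E) [μ.IsAddHaarMeasure] {A : E →L[ℝ] E}
    (hA : Function.Injective A) {s : Set E} (hs : MeasurableSet s) (g : E → F) :
    ⨍ y in A '' s, g y ∂μ = ⨍ x in s, g (A x) ∂μ := by
  have hdet : |A.det| ≠ 0 := fun h => by
    have := LinearMap.bot_lt_ker_of_det_eq_zero (abs_eq_zero.1 h)
    rw [LinearMap.ker_eq_bot.2 hA] at this
    exact lt_irrefl _ this
  have hvol : μ.real (A '' s) = |A.det| * μ.real s := by
    rw [Measure.real, Measure.addHaar_image_continuousLinearMap, ENNReal.toReal_mul,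
      ENNReal.toReal_ofReal (abs_nonneg _), Measure.real]
  rw [setAverage_eq, setAverage_eq, hvol, integral_image_eq_integral_abs_det_fderiv_smul μ hs
    (fun x _ => A.hasFDerivAt.hasFDerivWithinAt) hA.injOn g, integral_smul, smul_smul, mul_inv,
    mul_right_comm, inv_mul_cancel₀ hdet, one_mul]

/-- The parabolic dilation `(t, x) ↦ (R² t, R x)`. -/
noncomputable def parabolicScaling (d : ℕ) (R : ℝ) : ℝ × (Fin d → ℝ) →L[ℝ] ℝ × (Fin d → ℝ) :=
  (R ^ 2 • ContinuousLinearMap.id ℝ ℝ).prodMap (R • ContinuousLinearMap.id ℝ (Fin d → ℝ))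

section Scaling

variable {d : ℕ} {o : Fin d} {δ R ρ : ℝ} {f u h : ℝ × (Fin d → ℝ) → ℝ}
  {a : ℝ → Fin d → Fin d → ℝ} {D : (ℝ × (Fin d → ℝ) → ℝ) → ℝ × (Fin d → ℝ) → ℝ}

lemma parabolicScaling_apply (R : ℝ) (p : ℝ × (Fin d → ℝ)) :
    parabolicScaling d R p = (R ^ 2 * p.1, R • p.2) := rfl

lemma contDiff_comp_parabolicScaling (hf : ContDiff ℝ ∞ f) (R : ℝ) :
    ContDiff ℝ ∞ fun p => f (parabolicScaling d R p) :=
  hf.comp (parabolicScaling d R).contDiff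

lemma parabolicScaling_parabolicScaling_inv (hR : R ≠ 0) (p : ℝ × (Fin d → ℝ)) :
    parabolicScaling d R (parabolicScaling d R⁻¹ p) = p := by
  simp only [parabolicScaling_apply, inv_pow, smul_smul, mul_inv_cancel₀ hR, one_smul,
    mul_inv_cancel_left₀ (pow_ne_zero 2 hR)]

lemma injective_parabolicScaling (hR : R ≠ 0) : Function.Injective (parabolicScaling d R) := by
  have hinv := parabolicScaling_parabolicScaling_inv (d := d) (inv_ne_zero hR)
  rw [inv_inv] at hinv
  exact Function.LeftInverse.injective hinv

lemma sum_smul_sq (R : ℝ) (x : Fin d → ℝ) : ∑ j, (R • x) j ^ 2 = R ^ 2 * ∑ j, x j ^ 2 := by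
  simp [Finset.mul_sum, mul_pow]

lemma parabolicScaling_mem_Qc (hR : 0 < R) {p : ℝ × (Fin d → ℝ)} :
    parabolicScaling d R p ∈ Qc d (R * ρ) ↔ p ∈ Qc d ρ := by
  have hR2 : 0 < R ^ 2 := pow_pos hR 2
  simp only [Qc, ballE, parabolicScaling_apply, Set.mem_prod, Set.mem_Ioo, Set.mem_ofPred_eq,
    sum_smul_sq, mul_pow, mul_lt_mul_iff_right₀ hR2, mul_pos_iff_of_pos_left hR2]

lemma parabolicScaling_mem_pbQc (hR : 0 < R) {p : ℝ × (Fin d → ℝ)} :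
    parabolicScaling d R p ∈ pbQc d (R * ρ) ↔ p ∈ pbQc d ρ := by
  have hR2 : 0 < R ^ 2 := pow_pos hR 2
  simp only [pbQc, ballE, sphereE, parabolicScaling_apply, Set.mem_union, Set.mem_prod,
    Set.mem_Icc, Set.mem_singleton_iff, Set.mem_ofPred_eq, sum_smul_sq, mul_pow,
    mul_lt_mul_iff_right₀ hR2, mul_le_mul_iff_right₀ hR2, mul_right_inj' hR2.ne',
    mul_nonneg_iff_of_pos_left hR2]

lemma image_parabolicScaling_Qc (hR : 0 < R) :
    parabolicScaling d R '' Qc d ρ = Qc d (R * ρ) := by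
  refine Set.Subset.antisymm (Set.image_subset_iff.2 fun p => (parabolicScaling_mem_Qc hR).2)
    fun q hq => ⟨parabolicScaling d R⁻¹ q, ?_, parabolicScaling_parabolicScaling_inv hR.ne' q⟩
  rwa [← parabolicScaling_mem_Qc hR, parabolicScaling_parabolicScaling_inv hR.ne']

lemma avg_const_mul (s : Set (ℝ × (Fin d → ℝ))) (c : ℝ) (f : ℝ × (Fin d → ℝ) → ℝ) :
    avg s (fun p => c * f p) = c * avg s f := by
  simp only [avg, integral_const_mul, mul_left_comm]

lemma avg_comp_parabolicScaling (hR : 0 < R) (ρ : ℝ) (f : ℝ × (Fin d → ℝ) → ℝ) :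
    avg (Qc d ρ) (fun p => f (parabolicScaling d R p)) = avg (Qc d (R * ρ)) f := by
  have : (volume : Measure (ℝ × (Fin d → ℝ))).IsAddHaarMeasure := by
    rw [Measure.volume_eq_prod]
    infer_instance
  have := setAverage_image_eq_of_injective volume (injective_parabolicScaling (d := d) hR.ne')
    (isOpen_Qc d ρ).measurableSet f
  rw [image_parabolicScaling_Qc hR, setAverage_eq, setAverage_eq] at this
  exact this.symm

lemma meanOscSq_const_mul_comp_parabolicScaling (hR : 0 < R) (ρ c : ℝ)
    (w : ℝ × (Fin d → ℝ) → ℝ) :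
    meanOscSq ρ (fun p => c * w (parabolicScaling d R p)) = c ^ 2 * meanOscSq (R * ρ) w := by
  simp only [meanOscSq, avg_const_mul, avg_comp_parabolicScaling hR, ← mul_sub, mul_pow]
  rw [avg_comp_parabolicScaling hR ρ fun q => (w q - avg (Qc d (R * ρ)) w) ^ 2]

lemma fderiv_comp_parabolicScaling (hf : Differentiable ℝ f) (R : ℝ) (p e : ℝ × (Fin d → ℝ)) :
    fderiv ℝ (fun q => f (parabolicScaling d R q)) p e =
      fderiv ℝ f (parabolicScaling d R p) (parabolicScaling d R e) := by
  have := (hf (parabolicScaling d R p)).hasFDerivAt.comp p (parabolicScaling d R).hasFDerivAt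
  exact congrArg (fun A => A e) this.fderiv

lemma pdt_comp_parabolicScaling (hf : Differentiable ℝ f) (R : ℝ) :
    pdt (fun q => f (parabolicScaling d R q)) =
      fun p => R ^ 2 * pdt f (parabolicScaling d R p) := by
  funext p
  have he : parabolicScaling d R (1, 0) = R ^ 2 • (1, 0) := by simp [parabolicScaling_apply]
  rw [pdt, fderiv_comp_parabolicScaling hf, he, map_smul, smul_eq_mul, pdt]

lemma pdx_comp_parabolicScaling (hf : Differentiable ℝ f) (R : ℝ) (j : Fin d) :
    pdx j (fun q => f (parabolicScaling d R q)) =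
      fun p => R * pdx j f (parabolicScaling d R p) := by
  funext p
  have he : parabolicScaling d R (0, Pi.single j 1) = R • (0, Pi.single j 1) := by
    simp [parabolicScaling_apply]
  rw [pdx, fderiv_comp_parabolicScaling hf, he, map_smul, smul_eq_mul, pdx]

lemma pdx_const_mul (hf : Differentiable ℝ f) (c : ℝ) (j : Fin d) :
    pdx j (fun q => c * f q) = fun q => c * pdx j f q := by
  funext p
  simp [pdx, fderiv_const_mul (hf p)]

lemma pdxx_comp_parabolicScaling (hf : ContDiff ℝ ∞ f) (R : ℝ) (j k : Fin d) :
    pdxx j k (fun q => f (parabolicScaling d R q)) =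
      fun p => R ^ 2 * pdxx j k f (parabolicScaling d R p) := by
  have hk := contDiff_pdx hf k
  rw [pdxx, pdx_comp_parabolicScaling (hf.differentiable (by simp)),
    pdx_const_mul ((contDiff_comp_parabolicScaling hk R).differentiable (by simp)),
    pdx_comp_parabolicScaling (hk.differentiable (by simp))]
  simp only [pdxx, sq, mul_assoc]

lemma comp_parabolicScaling_of_mem_tangentialOps (hD : D ∈ tangentialOps o)
    (hf : ContDiff ℝ ∞ f) (R : ℝ) :
    D (fun q => f (parabolicScaling d R q)) = fun p => R ^ 2 * D f (parabolicScaling d R p) := by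
  obtain rfl | ⟨j, k, -, rfl⟩ := hD
  exacts [pdt_comp_parabolicScaling (hf.differentiable (by simp)) R,
    pdxx_comp_parabolicScaling hf R j k]

lemma hessianSq_comp_parabolicScaling (hf : ContDiff ℝ ∞ f) (R : ℝ) :
    hessianSq (fun q => f (parabolicScaling d R q)) =
      fun p => (R ^ 2) ^ 2 * hessianSq f (parabolicScaling d R p) := by
  funext p
  simp only [hessianSq, pdxx_comp_parabolicScaling hf, mul_pow, Finset.mul_sum]

lemma parabolicOp_comp_parabolicScaling (hf : ContDiff ℝ ∞ f) (R : ℝ) (o : Fin d)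
    (a : ℝ → Fin d → Fin d → ℝ) :
    parabolicOp o (fun s => a (R * s)) (fun q => f (parabolicScaling d R q)) =
      fun p => R ^ 2 * parabolicOp o a f (parabolicScaling d R p) := by
  funext p
  simp only [parabolicOp, pdt_comp_parabolicScaling (hf.differentiable (by simp)),
    pdxx_comp_parabolicScaling hf, mul_add, Finset.mul_sum, mul_left_comm (R ^ 2)]
  rfl

lemma IsUniformlyElliptic.comp_mul (ha : IsUniformlyElliptic δ a) (R : ℝ) :
    IsUniformlyElliptic δ fun s => a (R * s) where
  pos := ha.pos
  contDiff j k := (ha.contDiff j k).comp (contDiff_const.mul contDiff_id)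
  symm s := ha.symm (R * s)
  le_quadForm s := ha.le_quadForm (R * s)
  quadForm_le s := ha.quadForm_le (R * s)

lemma isSolutionWithData_comp_parabolicScaling (hR : 0 < R) (hu : ContDiff ℝ ∞ u)
    (hh : ContDiff ℝ ∞ h) (hsol : ∀ p ∈ Qc d R, parabolicOp o a h p = 0)
    (hbdry : ∀ p ∈ pbQc d R, h p = u p) :
    IsSolutionWithData o (fun s => a (R * s)) (fun p => u (parabolicScaling d R p))
      fun p => h (parabolicScaling d R p) where
  contDiff := contDiff_comp_parabolicScaling hh R
  contDiff_data := contDiff_comp_parabolicScaling hu R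
  parabolicOp_eq_zero p hp := by
    rw [parabolicOp_comp_parabolicScaling hh]
    have hmem := (parabolicScaling_mem_Qc hR).2 hp
    rw [mul_one] at hmem
    simp only [hsol _ hmem, mul_zero]
  eq_data p hp := by
    have hmem := (parabolicScaling_mem_pbQc hR).2 hp
    rw [mul_one] at hmem
    exact hbdry _ hmem

lemma exists_meanOscSq_le_of_contDiff (hδ : 0 < δ) (hD : D ∈ tangentialOps o) :
    ∃ N : ℝ, 0 ≤ N ∧ ∀ a, IsUniformlyElliptic δ a → ∀ κ r : ℝ, 4 ≤ κ → 0 < r →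
      ∀ u h, ContDiff ℝ ∞ u → ContDiff ℝ ∞ h →
        (∀ p ∈ Qc d (κ * r), parabolicOp o a h p = 0) → (∀ p ∈ pbQc d (κ * r), h p = u p) →
          meanOscSq r (D h) ≤ N * κ⁻¹ ^ 2 *
            (avg (Qc d (κ * r)) (fun p => parabolicOp o a u p ^ 2)
              + avg (Qc d (κ * r)) (hessianSq u)) := by
  obtain ⟨N, hN, hunit⟩ := exists_meanOscSq_le_unit hδ hD
  refine ⟨N, hN, fun a ha κ r hκ hr u h hu hh hsol hbdry => ?_⟩
  have hκ0 : 0 < κ := by linarith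
  set R := κ * r with hRdef
  have hR : 0 < R := mul_pos hκ0 hr
  have hRr : R * κ⁻¹ = r := by rw [hRdef, mul_right_comm, mul_inv_cancel₀ hκ0.ne', one_mul]
  have hscaled := hunit _ (ha.comp_mul R) _ _
    (isSolutionWithData_comp_parabolicScaling hR hu hh hsol hbdry) κ⁻¹ (inv_pos.2 hκ0)
    (by rw [one_div]; exact inv_anti₀ four_pos hκ)
  rw [comp_parabolicScaling_of_mem_tangentialOps hD hh,
    meanOscSq_const_mul_comp_parabolicScaling hR, hRr, hessianSq_comp_parabolicScaling hu,
    parabolicOp_comp_parabolicScaling hu] at hscaled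
  simp only [mul_pow _ (parabolicOp o a u _), avg_const_mul] at hscaled
  rw [avg_comp_parabolicScaling hR 1 fun q => parabolicOp o a u q ^ 2,
    avg_comp_parabolicScaling hR, mul_one, ← mul_add, mul_left_comm] at hscaled
  exact le_of_mul_le_mul_left hscaled (by positivity)

end Scaling

/-! ### Localization and conclusion -/

lemma exists_contDiff_eqOn_of_isClosed {E F : Type*} [NormedAddCommGroup E] [NormedSpace ℝ E]
    [FiniteDimensional ℝ E] [NormedAddCommGroup F] [NormedSpace ℝ F] {f : E → F} {U K : Set E}
    (hU : IsOpen U) (hK : IsClosed K) (hKU : K ⊆ U) (hf : ContDiffOn ℝ ∞ f U) :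
    ∃ g : E → F, ContDiff ℝ ∞ g ∧ Set.EqOn g f K := by
  obtain ⟨V, hV, hKV, hVU⟩ := normal_exists_closure_subset hK hU hKU
  obtain ⟨χ, hχ0, hχ1, -⟩ := exists_contMDiffMap_zero_one_of_isClosed (n := (⊤ : ℕ∞))
    (modelWithCornersSelf ℝ E) hV.isClosed_compl hK
    (Set.disjoint_compl_left_iff_subset.2 hKV)
  have hχ : ContDiff ℝ ∞ χ := contMDiff_iff_contDiff.1 χ.contMDiff
  refine ⟨fun p => χ p • f p, contDiff_iff_contDiffAt.2 fun p => ?_, fun p hp => ?_⟩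
  · by_cases hp : p ∈ U
    · exact hχ.contDiffAt.smul (hf.contDiffAt (hU.mem_nhds hp))
    · refine (contDiffAt_const (c := 0)).congr_of_eventuallyEq ?_
      filter_upwards [isClosed_closure.isOpen_compl.mem_nhds fun hpV => hp (hVU hpV)] with q hq
      have : χ q = 0 := hχ0 fun hqV => hq (subset_closure hqV)
      rw [this, zero_smul]
  · have : χ p = 1 := hχ1 hp
    simp only [this, one_smul]

section Localization

variable {d : ℕ} {o : Fin d} {f g : ℝ × (Fin d → ℝ) → ℝ} {s : Set (ℝ × (Fin d → ℝ))}
  {D : (ℝ × (Fin d → ℝ) → ℝ) → ℝ × (Fin d → ℝ) → ℝ}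

lemma eqOn_pdxx (hs : IsOpen s) (h : Set.EqOn f g s) (j k : Fin d) :
    Set.EqOn (pdxx j k f) (pdxx j k g) s :=
  eqOn_fderiv_apply hs (eqOn_fderiv_apply hs h (0, Pi.single k 1)) (0, Pi.single j 1)

lemma eqOn_of_mem_tangentialOps (hs : IsOpen s) (h : Set.EqOn f g s) (hD : D ∈ tangentialOps o) :
    Set.EqOn (D f) (D g) s := by
  obtain rfl | ⟨j, k, -, rfl⟩ := hD
  exacts [eqOn_fderiv_apply hs h (1, 0), eqOn_pdxx hs h j k]

lemma eqOn_hessianSq (hs : IsOpen s) (h : Set.EqOn f g s) :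
    Set.EqOn (hessianSq f) (hessianSq g) s := fun p hp => by
  simp only [hessianSq, eqOn_pdxx hs h _ _ hp]

lemma eqOn_parabolicOp (hs : IsOpen s) (h : Set.EqOn f g s) (o : Fin d)
    (a : ℝ → Fin d → Fin d → ℝ) : Set.EqOn (parabolicOp o a f) (parabolicOp o a g) s :=
  fun p hp => by
    have htime : pdt f p = pdt g p := eqOn_fderiv_apply hs h (1, 0) hp
    simp only [parabolicOp, htime, eqOn_pdxx hs h _ _ hp]

end Localization

lemma exists_meanOscSq_le {d : ℕ} {o : Fin d} {δ : ℝ} (hδ : 0 < δ)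
    {D : (ℝ × (Fin d → ℝ) → ℝ) → ℝ × (Fin d → ℝ) → ℝ} (hD : D ∈ tangentialOps o) :
    ∃ N : ℝ, 0 ≤ N ∧ ∀ a, IsUniformlyElliptic δ a → ∀ κ r : ℝ, 4 ≤ κ → 0 < r →
      ∀ (u h : ℝ × (Fin d → ℝ) → ℝ) (U : Set (ℝ × (Fin d → ℝ))),
        IsOpen U → closure (Qc d (κ * r)) ⊆ U → ContDiffOn ℝ ∞ u U → ContDiffOn ℝ ∞ h U →
        (∀ p ∈ Qc d (κ * r), parabolicOp o a h p = 0) → (∀ p ∈ pbQc d (κ * r), h p = u p) →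
          meanOscSq r (D h) ≤ N * κ⁻¹ ^ 2 *
            (avg (Qc d (κ * r)) (fun p => parabolicOp o a u p ^ 2)
              + avg (Qc d (κ * r)) (hessianSq u)) := by
  obtain ⟨N, hN, hsmooth⟩ := exists_meanOscSq_le_of_contDiff hδ hD
  refine ⟨N, hN, fun a ha κ r hκ hr u h U hU hQU hu hh hsol hbdry => ?_⟩
  obtain ⟨u', hu', huu'⟩ := exists_contDiff_eqOn_of_isClosed hU isClosed_closure hQU hu
  obtain ⟨h', hh', hhh'⟩ := exists_contDiff_eqOn_of_isClosed hU isClosed_closure hQU hh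
  have hQ := isOpen_Qc d (κ * r)
  have hpb := pbQc_subset_closure_Qc (d := d) (mul_pos (four_pos.trans_le hκ) hr)
  have huQ := huu'.mono subset_closure
  have hhQ := hhh'.mono subset_closure
  have hsub : Qc d r ⊆ Qc d (κ * r) := Qc_mono hr.le (by nlinarith)
  have hLu : Set.EqOn (fun p => parabolicOp o a u p ^ 2) (fun p => parabolicOp o a u' p ^ 2)
      (Qc d (κ * r)) := fun p hp => by simp only [eqOn_parabolicOp hQ huQ o a hp]
  rw [meanOscSq_congr ((eqOn_of_mem_tangentialOps hQ hhQ.symm hD).mono hsub),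
    avg_Qc_congr hLu, avg_Qc_congr (eqOn_hessianSq hQ huQ.symm)]
  exact hsmooth a ha κ r hκ hr u' h' hu' hh'
    (fun p hp => (eqOn_parabolicOp hQ hhQ o a hp).trans (hsol p hp))
    fun p hp => by rw [hhh' (hpb hp), huu' (hpb hp), hbdry p hp]

theorem stmt12_general {d : ℕ} (o : Fin d) {δ : ℝ} (hδ : 0 < δ) :
    ∃ N : ℝ, 0 < N ∧ ∀ a, IsUniformlyElliptic δ a → ∀ κ r : ℝ, 4 ≤ κ → 0 < r →
      ∀ (u h : ℝ × (Fin d → ℝ) → ℝ) (U : Set (ℝ × (Fin d → ℝ))),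
        IsOpen U → closure (Qc d (κ * r)) ⊆ U → ContDiffOn ℝ ∞ u U → ContDiffOn ℝ ∞ h U →
        (∀ p ∈ Qc d (κ * r), parabolicOp o a h p = 0) → (∀ p ∈ pbQc d (κ * r), h p = u p) →
          ∀ D ∈ tangentialOps o, meanOscSq r (D h) ≤ N * κ⁻¹ ^ 2 *
            (avg (Qc d (κ * r)) (fun p => parabolicOp o a u p ^ 2)
              + avg (Qc d (κ * r)) (hessianSq u)) := by
  choose! N _ hle using fun D (hD : D ∈ tangentialOps o) => exists_meanOscSq_le hδ hD
  obtain ⟨M, hM⟩ := ((finite_tangentialOps o).image N).bddAbove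
  refine ⟨max M 1, lt_max_of_lt_right one_pos,
    fun a ha κ r hκ hr u h U hU hQU hu hh hsol hbdry D hD =>
      (hle D hD a ha κ r hκ hr u h U hU hQU hu hh hsol hbdry).trans ?_⟩
  have hdata : 0 ≤ avg (Qc d (κ * r)) (fun p => parabolicOp o a u p ^ 2)
      + avg (Qc d (κ * r)) (hessianSq u) :=
    add_nonneg (mul_nonneg (by positivity) (integral_nonneg fun p => sq_nonneg _))
      (mul_nonneg (by positivity) (integral_nonneg (hessianSq_nonneg u)))
  gcongr
  exact (hM (Set.mem_image_of_mem N hD)).trans (le_max_left M 1)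

theorem stmt12 (d : ℕ) (hd : 2 ≤ d) (δ : ℝ) (hδ : δ ∈ Set.Ioo (0 : ℝ) 1) :
    ∃ N : ℝ, 0 < N ∧
      ∀ a : ℝ → Fin d → Fin d → ℝ,
        (∀ j k, ContDiff ℝ (⊤ : ℕ∞) fun s => a s j k) →
        (∀ s j k, a s j k = a s k j) →
        (∀ (s : ℝ) (θ : Fin d → ℝ),
          δ * ∑ j, (θ j) ^ 2 ≤ ∑ j, ∑ k, a s j k * θ j * θ k ∧
          ∑ j, ∑ k, a s j k * θ j * θ k ≤ δ⁻¹ * ∑ j, (θ j) ^ 2) →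
        ∀ κ r : ℝ, 4 ≤ κ → 0 < r →
          ∀ u : ℝ × (Fin d → ℝ) → ℝ, ContDiff ℝ (⊤ : ℕ∞) u → HasCompactSupport u →
            ∀ (h : ℝ × (Fin d → ℝ) → ℝ) (U : Set (ℝ × (Fin d → ℝ))),
              IsOpen U → closure (Qc d (κ * r)) ⊆ U → ContDiffOn ℝ (⊤ : ℕ∞) h U →
              (∀ p ∈ Qc d (κ * r),
                pdt h p + ∑ j, ∑ k, a (p.2 ⟨0, by omega⟩) j k * pdxx j k h p = 0) →
              (∀ p ∈ pbQc d (κ * r), h p = u p) →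
              (avg (Qc d r) (fun p => (pdt h p - avg (Qc d r) (pdt h)) ^ 2)
                  ≤ N * κ⁻¹ ^ 2 *
                    (avg (Qc d (κ * r)) (fun p =>
                        (pdt u p
                          + ∑ j, ∑ k, a (p.2 ⟨0, by omega⟩) j k * pdxx j k u p) ^ 2)
                      + avg (Qc d (κ * r)) (fun p => ∑ j, ∑ k, (pdxx j k u p) ^ 2))) ∧
              ∀ j k : Fin d, k.val ≠ 0 →
                avg (Qc d r) (fun p => (pdxx j k h p - avg (Qc d r) (pdxx j k h)) ^ 2)
                  ≤ N * κ⁻¹ ^ 2 *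
                    (avg (Qc d (κ * r)) (fun p =>
                        (pdt u p
                          + ∑ j', ∑ k', a (p.2 ⟨0, by omega⟩) j' k' * pdxx j' k' u p) ^ 2)
                      + avg (Qc d (κ * r)) (fun p => ∑ j', ∑ k', (pdxx j' k' u p) ^ 2)) := by
  obtain ⟨N, hN, hosc⟩ := stmt12_general (⟨0, by omega⟩ : Fin d) hδ.1
  refine ⟨N, hN, fun a hsmooth hsymm hell κ r hκ hr u hu _ h U hU hQU hh hsol hbdry => ?_⟩
  have ha : IsUniformlyElliptic δ a :=
    ⟨hδ.1, hsmooth, hsymm, fun s θ => (hell s θ).1, fun s θ => (hell s θ).2⟩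
  have hbound := hosc a ha κ r hκ hr u h U hU hQU hu.contDiffOn hh hsol hbdry
  exact ⟨hbound pdt (Set.mem_insert _ _), fun j k hk =>
    hbound (pdxx j k) (Or.inr ⟨j, k, fun hk0 => hk (congrArg Fin.val hk0), rfl⟩)⟩
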